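/- arXiv:math/9910160 — 2 statements merged into one kernel-verified Lean document; each statement's English description precedes it below -/
import Mathlib

section
/- For every ε ∈ (0,1/2) there is a constant C = C(ε) such that: for every n ≥ 0 and every continuous f : Sⁿ → ℝ with ω₂(f;Sⁿ) ≤ 1 − ε there exists a lattice norm N on ℝ^{n+1} such that |f(u) − (1/2)(Φ_N(u) − Φ_{N*}(u))| ≤ C for all u ∈ Sⁿ, where N* denotes the dual norm of N and Φ_N, Φ_{N*} the indicator functions of N and N*. (Theorem 2.9.) -/
open Finset

/-- `diffBound m K f c` says that the `m`-th modulus of smoothness of `f` on `K` is at most `c`,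
i.e. `|Δ_h^m f(x)| ≤ c` whenever `x, x+h, …, x+mh ∈ K`. -/
def diffBound {E : Type*} [AddCommGroup E] [Module ℝ E] (m : ℕ) (K : Set E) (f : E → ℝ)
    (c : ℝ) : Prop :=
  ∀ x h : E, (∀ j : ℕ, j ≤ m → x + (j : ℝ) • h ∈ K) →
    |∑ j ∈ Finset.range (m + 1), (-1 : ℝ) ^ (m - j) * (m.choose j : ℝ) * f (x + (j : ℝ) • h)| ≤ c

/-- A lattice norm on `ι → ℝ`: a norm which is monotone with respect to
coordinatewise absolute value. -/
def IsLatticeNorm {ι : Type*} [Fintype ι] (N : (ι → ℝ) → ℝ) : Prop :=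
  (∀ x, 0 ≤ N x) ∧ (∀ x, N x = 0 ↔ x = 0) ∧ (∀ (a : ℝ) (x), N (a • x) = |a| * N x) ∧
  (∀ x y, N (x + y) ≤ N x + N y) ∧ (∀ x y, (∀ i, |x i| ≤ |y i|) → N x ≤ N y)

/-- The dual norm `N*(y) = sup{∑ xᵢ yᵢ : N(x) ≤ 1}`. -/
noncomputable def dualNorm {ι : Type*} [Fintype ι] (N : (ι → ℝ) → ℝ) : (ι → ℝ) → ℝ :=
  fun y => sSup {v : ℝ | ∃ x, N x ≤ 1 ∧ v = ∑ i, x i * y i}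

/-- The indicator (entropy) function of a lattice norm:
`Φ_N(u) = sup{∑ uᵢ log₂|xᵢ| : N(x) ≤ 1, xᵢ ≠ 0}`. -/
noncomputable def latticeIndicator {ι : Type*} [Fintype ι] (N : (ι → ℝ) → ℝ) : (ι → ℝ) → ℝ :=
  fun u => sSup {v : ℝ | ∃ x, N x ≤ 1 ∧ (∀ i, x i ≠ 0) ∧ v = ∑ i, u i * Real.logb 2 |x i|}


set_option linter.unusedSectionVars false

namespace SimplexRep

/-- total mass -/
noncomputable def mass {ι : Type} [Fintype ι] (x : ι → ℝ) : ℝ := ∑ i, x i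

/-- homogeneous negative entropy -/
noncomputable def ent {ι : Type} [Fintype ι] (x : ι → ℝ) : ℝ :=
  ∑ i, x i * Real.log (x i) - mass x * Real.log (mass x)

/-- Jensen deficit of a homogeneous function -/
noncomputable def gap {ι : Type} (F : (ι → ℝ) → ℝ) {J : Type} [Fintype J]
    (x : J → ι → ℝ) : ℝ := F (∑ j, x j) - ∑ j, F (x j)

/-- mutual information of a family -/
noncomputable def info {ι : Type} [Fintype ι] {J : Type} [Fintype J]
    (x : J → ι → ℝ) : ℝ := ∑ j, ent (x j) - ent (∑ j, x j)

structure QA {ι : Type} [Fintype ι] (F : (ι → ℝ) → ℝ) (θ M : ℝ) : Prop where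
  hom : ∀ a : ℝ, 0 ≤ a → ∀ x, 0 ≤ x → F (a • x) = a * F x
  mid : ∀ x y, 0 ≤ x → 0 ≤ y → mass x = mass y → |F (x + y) - F x - F y| ≤ θ * mass x
  bdd : ∀ x, 0 ≤ x → |F x| ≤ M * mass x

lemma tan_le {s r : ℝ} (hs : 0 ≤ s) (hr : 0 ≤ r) (h : r = 0 → s = 0) :
    s * Real.log r - s * Real.log s ≤ r - s := by
  rcases hs.eq_or_lt with h0 | h0
  · subst h0; simpa using hr
  · have hr0 : 0 < r := lt_of_le_of_ne hr (fun h' => h0.ne' (h h'.symm))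
    have := Real.log_le_sub_one_of_pos (div_pos hr0 h0)
    rw [Real.log_div hr0.ne' h0.ne'] at this
    have h2 := mul_le_mul_of_nonneg_left this h0.le
    have : s * (r / s - 1) = r - s := by field_simp
    linarith

section
variable {ι : Type} [Fintype ι] {J : Type} [Fintype J]

lemma mass_nonneg {x : ι → ℝ} (hx : 0 ≤ x) : 0 ≤ mass x := Finset.sum_nonneg (fun i _ => hx i)
lemma mass_add (x y : ι → ℝ) : mass (x + y) = mass x + mass y := by
  simp [mass, Finset.sum_add_distrib]
lemma mass_sub (x y : ι → ℝ) : mass (x - y) = mass x - mass y := by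
  simp [mass, Finset.sum_sub_distrib]
lemma mass_smul (a : ℝ) (x : ι → ℝ) : mass (a • x) = a * mass x := by
  simp [mass, Finset.mul_sum]
lemma mass_sum (x : J → ι → ℝ) : mass (∑ j, x j) = ∑ j, mass (x j) := by
  simp only [mass, Finset.sum_apply]; exact Finset.sum_comm
lemma mass_mono {x y : ι → ℝ} (h : x ≤ y) : mass x ≤ mass y := Finset.sum_le_sum (fun i _ => h i)
lemma eq_zero_of_mass {x : ι → ℝ} (hx : 0 ≤ x) (h : mass x = 0) : x = 0 := by
  have := (Finset.sum_eq_zero_iff_of_nonneg (fun i _ => hx i)).1 h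
  funext i; exact this i (Finset.mem_univ i)
lemma mass_zero : mass (0 : ι → ℝ) = 0 := by simp [mass]

lemma ent_zero : ent (0 : ι → ℝ) = 0 := by simp [ent, mass]

lemma ent_smul (a : ℝ) (ha : 0 ≤ a) (x : ι → ℝ) (_hx : 0 ≤ x) : ent (a • x) = a * ent x := by
  rcases ha.eq_or_lt with h0 | h0
  · subst h0; simp [ent_zero]
  have key : ∀ t : ℝ, (a * t) * Real.log (a * t) = a * (t * Real.log t) + a * Real.log a * t := by
    intro t
    by_cases ht : t = 0
    · simp [ht]
    · rw [Real.log_mul h0.ne' ht]; ring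
  unfold ent
  rw [mass_smul, key]
  simp only [Pi.smul_apply, smul_eq_mul, key, Finset.sum_add_distrib, ← Finset.mul_sum]
  unfold mass; ring

lemma gibbs {x X : ι → ℝ} (hx : 0 ≤ x) (hX : x ≤ X) :
    ∑ i, x i * Real.log (X i) - mass x * Real.log (mass X) ≤ ent x := by
  by_cases h0 : mass x = 0
  · have := eq_zero_of_mass hx h0; subst this; simp [ent_zero, mass_zero]
  have hs : 0 < mass x := lt_of_le_of_ne (mass_nonneg hx) (Ne.symm h0)
  have hS : 0 < mass X := hs.trans_le (mass_mono hX)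
  have key : ∀ i, x i * Real.log (X i) + x i * (Real.log (mass x) - Real.log (mass X))
      - x i * Real.log (x i) ≤ X i * (mass x / mass X) - x i := by
    intro i
    by_cases hi : x i = 0
    · rw [hi]; simp
      exact mul_nonneg ((hx i).trans (hX i)) (by positivity)
    · have hxi : 0 < x i := lt_of_le_of_ne (hx i) (Ne.symm hi)
      have hXi : 0 < X i := hxi.trans_le (hX i)
      have := tan_le (s := x i) (r := X i * (mass x / mass X)) hxi.le (by positivity)
        (fun h => absurd h (by positivity))
      rw [Real.log_mul hXi.ne' (by positivity), Real.log_div hs.ne' hS.ne'] at this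
      linarith
  have := Finset.sum_le_sum (fun i (_ : i ∈ Finset.univ) => key i)
  rw [Finset.sum_sub_distrib, Finset.sum_sub_distrib, Finset.sum_add_distrib, ← Finset.sum_mul,
    ← Finset.sum_mul] at this
  change _ + mass x * _ - _ ≤ mass X * _ - mass x at this
  have e : mass X * (mass x / mass X) = mass x := by field_simp
  unfold ent
  linarith

lemma info_nonneg {x : J → ι → ℝ} (hx : ∀ j, 0 ≤ x j) : 0 ≤ info x := by
  have h : ∀ j, ∑ i, x j i * Real.log ((∑ j, x j) i) - mass (x j) * Real.log (mass (∑ j, x j))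
      ≤ ent (x j) := fun j => gibbs (hx j)
        (Finset.single_le_sum (f := x) (fun j _ => hx j) (Finset.mem_univ j))
  have := Finset.sum_le_sum (fun j (_ : j ∈ Finset.univ) => h j)
  rw [Finset.sum_sub_distrib, Finset.sum_comm, ← Finset.sum_mul, ← mass_sum] at this
  simp only [← Finset.sum_mul] at this
  unfold info
  have e : ent (∑ j, x j) = ∑ i, (∑ j, x j i) * Real.log ((∑ j, x j) i)
      - mass (∑ j, x j) * Real.log (mass (∑ j, x j)) := by
    unfold ent; simp only [Finset.sum_apply]
  linarith

lemma ent_add_le {x y : ι → ℝ} (hx : 0 ≤ x) (hy : 0 ≤ y) : ent (x + y) ≤ ent x + ent y := by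
  have h1 := gibbs hx (le_add_of_nonneg_right hy : x ≤ x + y)
  have h2 := gibbs hy (le_add_of_nonneg_left hx : y ≤ x + y)
  have : ent (x + y) = (∑ i, x i * Real.log ((x + y) i) - mass x * Real.log (mass (x + y)))
    + (∑ i, y i * Real.log ((x + y) i) - mass y * Real.log (mass (x + y))) := by
    unfold ent
    rw [show (∑ i, (x + y) i * Real.log ((x + y) i)) = ∑ i, x i * Real.log ((x + y) i)
      + ∑ i, y i * Real.log ((x + y) i) by
        rw [← Finset.sum_add_distrib]; exact Finset.sum_congr rfl fun i _ => by simp [add_mul]]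
    rw [mass_add]; ring
  linarith

lemma xlogx_mono {a b : ℝ} (ha : 0 ≤ a) (hb : 0 ≤ b) :
    a * Real.log a ≤ a * Real.log (a + b) := by
  rcases ha.eq_or_lt with h | h
  · simp [← h]
  · exact mul_le_mul_of_nonneg_left (Real.log_le_log h (by linarith)) ha

lemma ent_add_ge {x y : ι → ℝ} (hx : 0 ≤ x) (hy : 0 ≤ y) :
    ent x + ent y ≤ ent (x + y) + (mass x + mass y) * Real.log 2 := by
  have h1 : ∑ i, x i * Real.log (x i) + ∑ i, y i * Real.log (y i)
      ≤ ∑ i, (x + y) i * Real.log ((x + y) i) := by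
    rw [← Finset.sum_add_distrib]
    apply Finset.sum_le_sum
    intro i _
    have a := xlogx_mono (hx i) (hy i)
    have b := xlogx_mono (hy i) (hx i)
    simp only [Pi.add_apply]
    rw [add_comm (y i)] at b
    linarith
  have hs := mass_nonneg hx
  have ht := mass_nonneg hy
  have h2 : (mass x + mass y) * Real.log (mass x + mass y) - (mass x + mass y) * Real.log 2
      ≤ mass x * Real.log (mass x) + mass y * Real.log (mass y) := by
    set s := mass x
    set t := mass y
    by_cases h0 : s + t = 0
    · have : s = 0 := by linarith
      have : t = 0 := by linarith
      simp [*]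
    · have a := tan_le (s := s) (r := (s + t) / 2) hs (by linarith) (fun h => by linarith)
      have b := tan_le (s := t) (r := (s + t) / 2) ht (by linarith) (fun h => by linarith)
      rw [Real.log_div h0 (by norm_num)] at a b
      nlinarith
  unfold ent
  rw [mass_add]
  linarith

/-- entropy gap for equal masses -/
lemma ent_gap_eq {x y : ι → ℝ} (hm : mass x = mass y) :
    ent x + ent y - ent (x + y) = ∑ i, (x i * Real.log (x i) + y i * Real.log (y i)
      - (x i + y i) * Real.log (x i + y i) + (x i + y i) * Real.log 2) := by
  unfold ent
  rw [mass_add, ← hm]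
  simp only [Finset.sum_add_distrib, Finset.sum_sub_distrib, ← Finset.sum_mul, Pi.add_apply]
  change _ = _ + (mass x + mass y) * _
  rw [← hm]
  by_cases h : mass x = 0
  · simp [h]
  · rw [← two_mul, Real.log_mul two_ne_zero h]; ring

lemma term1 {x y : ℝ} (hx : 0 ≤ x) (hy : 0 ≤ y) :
    (x + y) / 2 * Real.log (15/16) + |x - y| / 2 * Real.log (5/3) ≤
    x * Real.log x + y * Real.log y - (x + y) * Real.log (x + y) + (x + y) * Real.log 2 := by
  wlog h : y ≤ x generalizing x y
  · have := this hy hx (by linarith)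
    rw [add_comm y x, abs_sub_comm] at this; linarith
  by_cases h0 : x + y = 0
  · have : x = 0 := by linarith
    have : y = 0 := by linarith
    simp [*]
  have hS : 0 < x + y := lt_of_le_of_ne (by linarith) (Ne.symm h0)
  have a := tan_le (s := x) (r := (x + y) / 2 * (5/4)) hx (by linarith) (fun h => by linarith)
  have b := tan_le (s := y) (r := (x + y) / 2 * (3/4)) hy (by linarith) (fun h => by linarith)
  rw [Real.log_mul (by positivity) (by norm_num), Real.log_div h0 (by norm_num)] at a b
  rw [abs_of_nonneg (by linarith)]
  have e1 : Real.log (15/16) = Real.log (5/4) + Real.log (3/4) := by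
    rw [← Real.log_mul] <;> norm_num
  have e2 : Real.log (5/3) = Real.log (5/4) - Real.log (3/4) := by
    rw [← Real.log_div] <;> norm_num
  rw [e1, e2]
  linarith

lemma term2 {x y τ : ℝ} (hx : 0 ≤ x) (hy : 0 ≤ y) (hτ : 0 < τ) (_hτ1 : τ ≤ 1) :
    (x + y) * Real.log 2 - τ * (x + y) - (1 - Real.log τ) * (((x + y) - |x - y|) / 2) ≤
    x * Real.log x + y * Real.log y - (x + y) * Real.log (x + y) + (x + y) * Real.log 2 := by
  wlog h : y ≤ x generalizing x y
  · have := this hy hx (by linarith)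
    rw [add_comm y x, abs_sub_comm] at this; linarith
  by_cases h0 : x + y = 0
  · have : x = 0 := by linarith
    have : y = 0 := by linarith
    simp [*]
  have hS : 0 < x + y := lt_of_le_of_ne (by linarith) (Ne.symm h0)
  have a := tan_le (s := x) (r := x + y) hx (by linarith) (fun h => by linarith)
  have b := tan_le (s := y) (r := (x + y) * τ) hy (by positivity)
    (fun h => absurd h (by positivity))
  rw [Real.log_mul h0 hτ.ne'] at b
  rw [abs_of_nonneg (by linarith)]
  nlinarith

end

lemma contraction {P : ℝ → Prop} {K0 B ρ : ℝ} (hρ : 0 ≤ ρ) (hρ1 : ρ < 1) (h0 : P K0)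
    (hmono : ∀ K K', K ≤ K' → P K → P K') (hcl : ∀ K, (∀ δ > 0, P (K + δ)) → P K)
    (hB : 0 ≤ B) (hstep : ∀ K, 0 ≤ K → P K → P (B + ρ * K)) : P (B / (1 - ρ)) := by
  have h1 : 0 < 1 - ρ := by linarith
  have hL : B + ρ * (B / (1 - ρ)) = B / (1 - ρ) := by field_simp; ring
  have hn : ∀ n : ℕ, P (B / (1 - ρ) + ρ ^ n * |K0|) := by
    intro n
    induction n with
    | zero =>
      refine hmono K0 _ ?_ h0
      have : 0 ≤ B / (1 - ρ) := by positivity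
      have := le_abs_self K0
      simp; linarith
    | succ n ih =>
      have := hstep _ (by positivity) ih
      have e : B + ρ * (B / (1 - ρ) + ρ ^ n * |K0|) = B / (1 - ρ) + ρ ^ (n+1) * |K0| := by
        rw [mul_add, ← add_assoc, hL]; ring
      rwa [e] at this
  apply hcl
  intro δ hδ
  have ht : Filter.Tendsto (fun n : ℕ => ρ ^ n * |K0|) Filter.atTop (nhds (0 * |K0|)) :=
    (tendsto_pow_atTop_nhds_zero_of_lt_one hρ hρ1).mul_const _
  rw [zero_mul] at ht
  obtain ⟨n, hn'⟩ := (ht.eventually (gt_mem_nhds hδ)).exists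
  exact hmono _ _ (by linarith) (hn n)

section
variable {ι : Type} [Fintype ι] {J : Type} [Fintype J]

lemma QA.zero {F : (ι → ℝ) → ℝ} {θ M : ℝ} (hF : QA F θ M) : F 0 = 0 := by
  have := hF.hom 0 le_rfl 0 le_rfl
  simpa using this

lemma QA.neg {F : (ι → ℝ) → ℝ} {θ M : ℝ} (hF : QA F θ M) : QA (fun x => - F x) θ M where
  hom a ha x hx := by rw [hF.hom a ha x hx]; ring
  mid x y hx hy h := by
    have := hF.mid x y hx hy h
    rw [← abs_neg]; convert this using 2; ring
  bdd x hx := by rw [abs_neg]; exact hF.bdd x hx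

lemma QA.add_aux {F : (ι → ℝ) → ℝ} {θ M K : ℝ} (hF : QA F θ M)
    (hK : ∀ x y, 0 ≤ x → 0 ≤ y → |F (x + y) - F x - F y| ≤ K * (mass x + mass y))
    (x y : ι → ℝ) (hx : 0 ≤ x) (hy : 0 ≤ y) (h : mass x ≤ mass y) :
    |F (x + y) - F x - F y| ≤ (θ / 2 + 1 / 2 * K) * (mass x + mass y) := by
  have hs := mass_nonneg hx
  by_cases h0 : mass y = 0
  · have := eq_zero_of_mass hy h0; subst this
    have := eq_zero_of_mass hx (by linarith); subst this
    simp [hF.zero, mass_zero]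
  have ht : 0 < mass y := lt_of_le_of_ne (mass_nonneg hy) (Ne.symm h0)
  set s := mass x
  set t := mass y
  have pa : 0 ≤ (t - s) / (2 * t) := div_nonneg (by linarith) (by linarith)
  have pb : 0 ≤ (s + t) / (2 * t) := div_nonneg (by linarith) (by linarith)
  have ha : 0 ≤ ((t - s) / (2 * t)) • y := smul_nonneg pa hy
  have hb : 0 ≤ ((s + t) / (2 * t)) • y := smul_nonneg pb hy
  have ma : mass (((t - s) / (2 * t)) • y) = (t - s) / 2 := by
    rw [mass_smul]; change _ * t = _; field_simp
  have mb : mass (((s + t) / (2 * t)) • y) = (s + t) / 2 := by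
    rw [mass_smul]; change _ * t = _; field_simp
  have e1 : (t - s) / (2 * t) + (s + t) / (2 * t) = 1 := by field_simp; ring
  have exy : x + y = (x + ((t - s) / (2 * t)) • y) + ((s + t) / (2 * t)) • y := by
    rw [add_assoc, ← add_smul, e1, one_smul]
  have h1 := hF.mid (x + ((t - s) / (2 * t)) • y) (((s + t) / (2 * t)) • y)
    (add_nonneg hx ha) hb (by rw [mass_add, ma, mb]; change s + _ = _; ring)
  have h2 := hK x _ hx ha
  rw [← exy, mass_add, ma] at h1
  rw [ma] at h2
  rw [hF.hom _ pb y hy] at h1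
  rw [hF.hom _ pa y hy] at h2
  have e3 : F y = (t - s) / (2 * t) * F y + (s + t) / (2 * t) * F y := by
    rw [← add_mul, e1, one_mul]
  rw [abs_le] at *
  change -(θ * (s + _)) ≤ _ ∧ _ ≤ θ * (s + _) at h1
  change -(K * (s + _)) ≤ _ ∧ _ ≤ K * (s + _) at h2
  constructor <;> nlinarith [h1.1, h1.2, h2.1, h2.2]

lemma QA.add {F : (ι → ℝ) → ℝ} {θ M : ℝ} (hθ : 0 ≤ θ) (hF : QA F θ M) :
    ∀ x y, 0 ≤ x → 0 ≤ y → |F (x + y) - F x - F y| ≤ θ * (mass x + mass y) := by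
  have := contraction (P := fun K => ∀ x y : ι → ℝ, 0 ≤ x → 0 ≤ y →
    |F (x + y) - F x - F y| ≤ K * (mass x + mass y)) (K0 := 2 * M) (B := θ / 2) (ρ := 1/2)
    (by norm_num) (by norm_num) ?_ ?_ ?_ (by linarith) ?_
  · have e : θ / 2 / (1 - 1/2) = θ := by ring
    rwa [e] at this
  · intro x y hx hy
    have a := hF.bdd x hx
    have b := hF.bdd y hy
    have c := hF.bdd (x + y) (add_nonneg hx hy)
    rw [mass_add] at c
    rw [abs_le] at *
    constructor <;> linarith [a.1, a.2, b.1, b.2, c.1, c.2]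
  · intro K K' hKK h x y hx hy
    exact (h x y hx hy).trans (mul_le_mul_of_nonneg_right hKK
      (add_nonneg (mass_nonneg hx) (mass_nonneg hy)))
  · intro K h x y hx hy
    have hm := add_nonneg (mass_nonneg hx) (mass_nonneg hy)
    apply le_of_forall_pos_le_add
    intro δ hδ
    have := h (δ / (mass x + mass y + 1)) (by positivity) x y hx hy
    have e : δ / (mass x + mass y + 1) * (mass x + mass y) ≤ δ := by
      rw [div_mul_eq_mul_div, div_le_iff₀ (by linarith)]; nlinarith
    nlinarith
  · intro K _ hK x y hx hy
    rcases le_total (mass x) (mass y) with h | h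
    · exact hF.add_aux hK x y hx hy h
    · have := hF.add_aux hK y x hy hx h
      rw [add_comm y x, add_comm (mass y)] at this
      convert this using 2; ring

/-- first half of the doubled family -/
noncomputable def dblA (x : J → ι → ℝ) (p : J × J) : ι → ℝ := (mass (x p.2) / 2) • x p.1
noncomputable def dblB (x : J → ι → ℝ) (p : J × J) : ι → ℝ := (mass (x p.1) / 2) • x p.2
noncomputable def dbl (x : J → ι → ℝ) (p : J × J) : ι → ℝ := dblA x p + dblB x p
noncomputable def dblE (x : J → ι → ℝ) : ℝ :=
  ∑ p, (ent (dblA x p) + ent (dblB x p) - ent (dbl x p))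

lemma dblA_nonneg {x : J → ι → ℝ} (hx : ∀ j, 0 ≤ x j) (p) : 0 ≤ dblA x p :=
  smul_nonneg (by have := mass_nonneg (hx p.2); linarith) (hx _)
lemma dblB_nonneg {x : J → ι → ℝ} (hx : ∀ j, 0 ≤ x j) (p) : 0 ≤ dblB x p :=
  smul_nonneg (by have := mass_nonneg (hx p.1); linarith) (hx _)
lemma dbl_nonneg {x : J → ι → ℝ} (hx : ∀ j, 0 ≤ x j) (p) : 0 ≤ dbl x p :=
  add_nonneg (dblA_nonneg hx p) (dblB_nonneg hx p)
lemma mass_dblA (x : J → ι → ℝ) (p) : mass (dblA x p) = mass (x p.1) * mass (x p.2) / 2 := by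
  rw [dblA, mass_smul]; ring
lemma mass_dblB (x : J → ι → ℝ) (p) : mass (dblB x p) = mass (x p.1) * mass (x p.2) / 2 := by
  rw [dblB, mass_smul]; ring

lemma sum_homA {Ψ : (ι → ℝ) → ℝ} (hΨ : ∀ a : ℝ, 0 ≤ a → ∀ x, 0 ≤ x → Ψ (a • x) = a * Ψ x)
    {x : J → ι → ℝ} (hx : ∀ j, 0 ≤ x j) (h1 : ∑ j, mass (x j) = 1) :
    ∑ p, Ψ (dblA x p) = (∑ j, Ψ (x j)) / 2 := by
  rw [Fintype.sum_prod_type, Finset.sum_div]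
  refine Finset.sum_congr rfl fun j _ => ?_
  have : ∀ k, Ψ (dblA x (j, k)) = mass (x k) * (Ψ (x j) / 2) := by
    intro k
    rw [dblA, hΨ _ (by have := mass_nonneg (hx k); simp; linarith) _ (hx _)]; ring
  simp only [this, ← Finset.sum_mul, h1, one_mul]

lemma sum_homB {Ψ : (ι → ℝ) → ℝ} (hΨ : ∀ a : ℝ, 0 ≤ a → ∀ x, 0 ≤ x → Ψ (a • x) = a * Ψ x)
    {x : J → ι → ℝ} (hx : ∀ j, 0 ≤ x j) (h1 : ∑ j, mass (x j) = 1) :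
    ∑ p, Ψ (dblB x p) = (∑ j, Ψ (x j)) / 2 := by
  rw [← sum_homA hΨ hx h1]
  exact Fintype.sum_equiv (Equiv.prodComm J J) _ _ (fun p => by simp [dblA, dblB])

lemma sum_dbl {x : J → ι → ℝ} (hx : ∀ j, 0 ≤ x j) (h1 : ∑ j, mass (x j) = 1) :
    ∑ p, dbl x p = ∑ j, x j := by
  funext i
  have hΨ : ∀ a : ℝ, 0 ≤ a → ∀ x : ι → ℝ, 0 ≤ x → (fun z : ι → ℝ => z i) (a • x)
    = a * (fun z : ι → ℝ => z i) x := by intros; simp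
  have a := sum_homA (Ψ := fun z : ι → ℝ => z i) hΨ hx h1
  have b := sum_homB (Ψ := fun z : ι → ℝ => z i) hΨ hx h1
  simp only [Finset.sum_apply, dbl, Pi.add_apply, Finset.sum_add_distrib]
  rw [a, b]; ring

lemma sum_mass_prod {x : J → ι → ℝ} (h1 : ∑ j, mass (x j) = 1) :
    ∑ p : J × J, mass (x p.1) * mass (x p.2) = 1 := by
  rw [Fintype.sum_prod_type]
  simp only [← Finset.mul_sum, h1, mul_one]

lemma sum_mass_dbl {x : J → ι → ℝ} (hx : ∀ j, 0 ≤ x j) (h1 : ∑ j, mass (x j) = 1) :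
    ∑ p, mass (dbl x p) = 1 := by
  rw [← mass_sum, sum_dbl hx h1, mass_sum, h1]

lemma info_dbl {x : J → ι → ℝ} (hx : ∀ j, 0 ≤ x j) (h1 : ∑ j, mass (x j) = 1) :
    info x = info (dbl x) + dblE x := by
  unfold info dblE
  rw [sum_dbl hx h1, Finset.sum_sub_distrib, Finset.sum_add_distrib,
    sum_homA ent_smul hx h1, sum_homB ent_smul hx h1]
  ring

lemma gap_dbl {F : (ι → ℝ) → ℝ} {θ M : ℝ} (hF : QA F θ M)
    {x : J → ι → ℝ} (hx : ∀ j, 0 ≤ x j) (h1 : ∑ j, mass (x j) = 1) :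
    gap F x ≤ gap F (dbl x) + θ / 2 := by
  unfold gap
  rw [sum_dbl hx h1]
  have h : ∀ p, F (dbl x p) - F (dblA x p) - F (dblB x p) ≤ θ / 2 * (mass (x p.1) * mass (x p.2)) := by
    intro p
    have := hF.mid _ _ (dblA_nonneg hx p) (dblB_nonneg hx p) (by rw [mass_dblA, mass_dblB])
    rw [mass_dblA] at this
    have := (abs_le.1 this).2
    unfold dbl
    linarith
  have := Finset.sum_le_sum (fun p (_ : p ∈ Finset.univ) => h p)
  rw [Finset.sum_sub_distrib, Finset.sum_sub_distrib, sum_homA hF.hom hx h1,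
    sum_homB hF.hom hx h1, ← Finset.mul_sum, sum_mass_prod h1] at this
  linarith

/-- total variation of the doubled family -/
noncomputable def dblD (x : J → ι → ℝ) : ℝ := ∑ p, ∑ i, |dblA x p i - dblB x p i|

lemma sum_AB {x : J → ι → ℝ} (hx : ∀ j, 0 ≤ x j) (h1 : ∑ j, mass (x j) = 1) :
    ∑ p, ∑ i, (dblA x p i + dblB x p i) = 1 := sum_mass_dbl hx h1

lemma dblE_ge1 {x : J → ι → ℝ} (hx : ∀ j, 0 ≤ x j) (h1 : ∑ j, mass (x j) = 1) :
    1 / 2 * Real.log (15/16) + dblD x / 2 * Real.log (5/3) ≤ dblE x := by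
  have h : ∀ p, ∑ i, ((dblA x p i + dblB x p i) * (Real.log (15/16) / 2)
      + |dblA x p i - dblB x p i| * (Real.log (5/3) / 2)) ≤
      ent (dblA x p) + ent (dblB x p) - ent (dbl x p) := by
    intro p
    rw [dbl, ent_gap_eq (by rw [mass_dblA, mass_dblB])]
    apply Finset.sum_le_sum
    intro i _
    have := term1 (dblA_nonneg hx p i) (dblB_nonneg hx p i)
    linarith
  have := Finset.sum_le_sum (fun p (_ : p ∈ Finset.univ) => h p)
  simp only [Finset.sum_add_distrib (f := fun i => (dblA x _ i + dblB x _ i) * _)] at this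
  simp only [← Finset.sum_mul] at this
  rw [Finset.sum_add_distrib, ← Finset.sum_mul, ← Finset.sum_mul, sum_AB hx h1] at this
  unfold dblE
  unfold dblD
  linarith

lemma dblE_ge2 {x : J → ι → ℝ} (hx : ∀ j, 0 ≤ x j) (h1 : ∑ j, mass (x j) = 1)
    {τ : ℝ} (hτ : 0 < τ) (hτ1 : τ ≤ 1) :
    Real.log 2 - τ - (1 - Real.log τ) * ((1 - dblD x) / 2) ≤ dblE x := by
  have h : ∀ p, ∑ i, ((dblA x p i + dblB x p i) * (Real.log 2 - τ - (1 - Real.log τ) / 2)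
      + |dblA x p i - dblB x p i| * ((1 - Real.log τ) / 2)) ≤
      ent (dblA x p) + ent (dblB x p) - ent (dbl x p) := by
    intro p
    rw [dbl, ent_gap_eq (by rw [mass_dblA, mass_dblB])]
    apply Finset.sum_le_sum
    intro i _
    have := term2 (dblA_nonneg hx p i) (dblB_nonneg hx p i) hτ hτ1
    linarith
  have := Finset.sum_le_sum (fun p (_ : p ∈ Finset.univ) => h p)
  simp only [Finset.sum_add_distrib (f := fun i => (dblA x _ i + dblB x _ i) * _)] at this
  simp only [← Finset.sum_mul] at this
  rw [Finset.sum_add_distrib, ← Finset.sum_mul, ← Finset.sum_mul, sum_AB hx h1] at this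
  unfold dblE
  unfold dblD
  linarith

/-! peeling -/
noncomputable def pm (x : J → ι → ℝ) (j : J) : ι → ℝ := (mass (x j) • ∑ k, x k) ⊓ x j
noncomputable def py (x : J → ι → ℝ) (j : J) : ι → ℝ := mass (x j) • ∑ k, x k - pm x j
noncomputable def pz (x : J → ι → ℝ) (j : J) : ι → ℝ := x j - pm x j

lemma sum_nn {x : J → ι → ℝ} (hx : ∀ j, 0 ≤ x j) : 0 ≤ ∑ j, x j :=
  Finset.sum_nonneg (fun j _ => hx j)

lemma pm_nonneg {x : J → ι → ℝ} (hx : ∀ j, 0 ≤ x j) (j) : 0 ≤ pm x j :=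
  le_inf (smul_nonneg (mass_nonneg (hx j)) (sum_nn hx)) (hx j)
lemma py_nonneg (x : J → ι → ℝ) (j) : 0 ≤ py x j := sub_nonneg.2 inf_le_left
lemma pz_nonneg (x : J → ι → ℝ) (j) : 0 ≤ pz x j := sub_nonneg.2 inf_le_right
lemma pmy (x : J → ι → ℝ) (j) : pm x j + py x j = mass (x j) • ∑ k, x k := by simp [py]
lemma pmz (x : J → ι → ℝ) (j) : pm x j + pz x j = x j := by simp [pz]

lemma sum_smul_tot {x : J → ι → ℝ} (h1 : ∑ j, mass (x j) = 1) :
    ∑ j, mass (x j) • ∑ k, x k = ∑ k, x k := by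
  rw [← Finset.sum_smul, h1, one_smul]

lemma sum_py_eq {x : J → ι → ℝ} (h1 : ∑ j, mass (x j) = 1) : ∑ j, py x j = ∑ j, pz x j := by
  simp only [py, pz, Finset.sum_sub_distrib]
  rw [sum_smul_tot h1]

lemma mass_tot {x : J → ι → ℝ} (h1 : ∑ j, mass (x j) = 1) : mass (∑ k, x k) = 1 := by
  rw [mass_sum, h1]

lemma peel_gap {F : (ι → ℝ) → ℝ} {θ M : ℝ} (hθ : 0 ≤ θ) (hF : QA F θ M)
    {x : J → ι → ℝ} (hx : ∀ j, 0 ≤ x j) (h1 : ∑ j, mass (x j) = 1) :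
    gap F x ≤ gap F (pz x) - gap F (py x) + 2 * θ := by
  have h : ∀ j, F (mass (x j) • ∑ k, x k) - F (x j) ≤ F (py x j) - F (pz x j)
      + 2 * θ * mass (x j) := by
    intro j
    have a := (abs_le.1 (hF.add hθ _ _ (pm_nonneg hx j) (py_nonneg x j))).2
    have b := (abs_le.1 (hF.add hθ _ _ (pm_nonneg hx j) (pz_nonneg x j))).1
    rw [← mass_add, pmy, mass_smul, mass_tot h1] at a
    rw [← mass_add, pmz] at b
    linarith
  have := Finset.sum_le_sum (fun p (_ : p ∈ Finset.univ) => h p)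
  have e : ∀ j, F (mass (x j) • ∑ k, x k) = mass (x j) * F (∑ k, x k) := fun j =>
    hF.hom _ (mass_nonneg (hx j)) _ (sum_nn hx)
  simp only [e, Finset.sum_sub_distrib, Finset.sum_add_distrib, ← Finset.sum_mul,
    ← Finset.mul_sum, h1, one_mul, mul_one] at this
  unfold gap
  rw [sum_py_eq h1]
  linarith

lemma peel_info_z {x : J → ι → ℝ} (hx : ∀ j, 0 ≤ x j) (h1 : ∑ j, mass (x j) = 1) :
    info (pz x) ≤ info x + Real.log 2 + info (py x) := by
  have h : ∀ j, ent (pz x j) - ent (py x j) ≤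
      ent (x j) - ent (mass (x j) • ∑ k, x k) + mass (x j) * Real.log 2 := by
    intro j
    have a := ent_add_le (pm_nonneg hx j) (py_nonneg x j)
    have b := ent_add_ge (pm_nonneg hx j) (pz_nonneg x j)
    rw [pmy] at a
    rw [← mass_add, pmz] at b
    linarith
  have := Finset.sum_le_sum (fun p (_ : p ∈ Finset.univ) => h p)
  have e : ∀ j, ent (mass (x j) • ∑ k, x k) = mass (x j) * ent (∑ k, x k) := fun j =>
    ent_smul _ (mass_nonneg (hx j)) _ (sum_nn hx)
  simp only [e, Finset.sum_sub_distrib, Finset.sum_add_distrib, ← Finset.sum_mul,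
    h1, one_mul] at this
  unfold info
  rw [sum_py_eq h1]
  linarith

lemma peel_info_y {x : J → ι → ℝ} (hx : ∀ j, 0 ≤ x j) (h1 : ∑ j, mass (x j) = 1) :
    info (py x) ≤ 2 := by
  set u := ∑ k, x k with hu
  set y := py x with hy
  have y0 : ∀ j i, 0 ≤ y j i := fun j i => py_nonneg x j i
  have yle : ∀ j, y j ≤ mass (x j) • u := fun j => sub_le_self _ (pm_nonneg hx j)
  have u0 : 0 ≤ u := sum_nn hx
  have mu : mass u = 1 := mass_tot h1
  have ht : ∀ j, mass (y j) ≤ mass (x j) := fun j => by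
    have := mass_mono (yle j); rwa [mass_smul, mu, mul_one] at this
  have hY : ∀ i, (∑ j, y j) i ≤ u i := fun i => by
    have : ∑ j, y j ≤ ∑ j, mass (x j) • u := Finset.sum_le_sum fun j _ => yle j
    rw [sum_smul_tot h1] at this
    exact this i
  have hY0 : 0 ≤ ∑ j, y j := Finset.sum_nonneg fun j _ => py_nonneg x j
  have t1 : ∀ j i, y j i * Real.log (y j i) ≤
      y j i * Real.log (mass (x j)) + y j i * Real.log (u i) := by
    intro j i
    rcases (y0 j i).eq_or_lt with h | h
    · simp [← h]
    · have h2 : y j i ≤ mass (x j) * u i := yle j i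
      have h3 : 0 < mass (x j) * u i := h.trans_le h2
      have hm : mass (x j) ≠ 0 := fun h => by simp [h] at h3
      have hui : u i ≠ 0 := fun h => by simp [h] at h3
      rw [← mul_add, ← Real.log_mul hm hui]
      exact mul_le_mul_of_nonneg_left (Real.log_le_log h h2) h.le
  have t2 : ∀ j, mass (y j) * Real.log (mass (x j)) - mass (y j) * Real.log (mass (y j))
      ≤ mass (x j) - mass (y j) := fun j =>
    tan_le (mass_nonneg (py_nonneg x j)) (mass_nonneg (hx j))
      (fun h => le_antisymm ((ht j).trans h.le) (mass_nonneg (py_nonneg x j)))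
  have t3 : ∀ i, (∑ j, y j) i * Real.log (u i) - (∑ j, y j) i * Real.log ((∑ j, y j) i)
      ≤ u i - (∑ j, y j) i := fun i =>
    tan_le (hY0 i) (u0 i) (fun h => le_antisymm ((hY i).trans h.le) (hY0 i))
  have s1 := Finset.sum_le_sum (fun j (_ : j ∈ Finset.univ) =>
    Finset.sum_le_sum (fun i (_ : i ∈ Finset.univ) => t1 j i))
  have s2 := Finset.sum_le_sum (fun j (_ : j ∈ Finset.univ) => t2 j)
  have s3 := Finset.sum_le_sum (fun j (_ : j ∈ Finset.univ) => t3 j)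
  have e1 : ∑ j, ∑ i, (y j i * Real.log (mass (x j)) + y j i * Real.log (u i))
      = ∑ j, mass (y j) * Real.log (mass (x j)) + ∑ i, (∑ j, y j) i * Real.log (u i) := by
    simp only [Finset.sum_add_distrib]
    congr 1
    · simp only [mass, Finset.sum_mul]
    · rw [Finset.sum_comm]; simp only [Finset.sum_apply, Finset.sum_mul]
  rw [e1] at s1
  simp only [Finset.sum_sub_distrib] at s2 s3
  rw [h1] at s2
  change _ ≤ mass u - mass (∑ j, y j) at s3
  rw [mu] at s3
  have m0 : 0 ≤ mass (∑ j, y j) := mass_nonneg hY0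
  have m1 : mass (∑ j, y j) ≤ 1 := by rw [← mu]; exact mass_mono hY
  have s4 : mass (∑ j, y j) * Real.log (mass (∑ j, y j)) ≤ 0 :=
    mul_nonpos_of_nonneg_of_nonpos m0 (Real.log_nonpos m0 m1)
  have s5 : 0 ≤ ∑ j, mass (y j) := Finset.sum_nonneg fun j _ => mass_nonneg (py_nonneg x j)
  unfold info ent
  rw [Finset.sum_sub_distrib]
  linarith

lemma peel_mass {x : J → ι → ℝ} (h1 : ∑ j, mass (x j) = 1) :
    ∑ j, mass (py x j) ≤ dblD x := by
  have hyz : ∑ j, mass (py x j) = ∑ j, mass (pz x j) := by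
    rw [← mass_sum, ← mass_sum, sum_py_eq h1]
  have hsum : ∀ j i, py x j i + pz x j i = |mass (x j) * (∑ k, x k) i - x j i| := by
    intro j i
    simp only [py, pz, pm, Pi.sub_apply, Pi.inf_apply, Pi.smul_apply, smul_eq_mul]
    rcases le_total (mass (x j) * (∑ k, x k) i) (x j i) with h | h
    · rw [inf_eq_left.2 h, abs_of_nonpos (by linarith)]; ring
    · rw [inf_eq_right.2 h, abs_of_nonneg (by linarith)]; ring
  have hle : ∀ j i, py x j i + pz x j i ≤ 2 * ∑ k, |dblA x (j, k) i - dblB x (j, k) i| := by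
    intro j i
    rw [hsum]
    have : mass (x j) * (∑ k, x k) i - x j i = ∑ k, (-2) * (dblA x (j, k) i - dblB x (j, k) i) := by
      have : x j i = ∑ k, mass (x k) * x j i := by rw [← Finset.sum_mul, h1, one_mul]
      conv_lhs => rw [this]
      rw [Finset.sum_apply, Finset.mul_sum, ← Finset.sum_sub_distrib]
      refine Finset.sum_congr rfl fun k _ => ?_
      simp [dblA, dblB]; ring
    rw [this, Finset.mul_sum]
    refine (Finset.abs_sum_le_sum_abs _ _).trans (Finset.sum_le_sum fun k _ => ?_)
    rw [abs_mul]; norm_num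
  have := Finset.sum_le_sum (fun j (_ : j ∈ Finset.univ) =>
    Finset.sum_le_sum (fun i (_ : i ∈ Finset.univ) => hle j i))
  simp only [Finset.sum_add_distrib] at this
  change ∑ j, mass (py x j) + ∑ j, mass (pz x j) ≤ _ at this
  have e : ∑ j, ∑ i, 2 * ∑ k, |dblA x (j, k) i - dblB x (j, k) i| = 2 * dblD x := by
    unfold dblD
    rw [Fintype.sum_prod_type, Finset.mul_sum]
    refine Finset.sum_congr rfl fun j _ => ?_
    rw [← Finset.mul_sum, Finset.sum_comm]
  rw [e] at this
  linarith

end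

/-- uniform Jensen bound for normalized families -/
def Bd {ι : Type} [Fintype ι] (F : (ι → ℝ) → ℝ) (A K : ℝ) : Prop :=
  ∀ (J : Type) [Fintype J] (x : J → ι → ℝ), (∀ j, 0 ≤ x j) → ∑ j, mass (x j) = 1 →
    gap F x ≤ A * info x + K

section
variable {ι : Type} [Fintype ι]

lemma Bd.scale {F : (ι → ℝ) → ℝ} {θ M A K : ℝ} (hF : QA F θ M) (h : Bd F A K)
    {J : Type} [Fintype J] (x : J → ι → ℝ) (hx : ∀ j, 0 ≤ x j) :
    gap F x ≤ A * info x + K * ∑ j, mass (x j) := by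
  have hS0 : 0 ≤ ∑ j, mass (x j) := Finset.sum_nonneg fun j _ => mass_nonneg (hx j)
  rcases hS0.eq_or_lt with hS | hS
  · have : ∀ j, x j = 0 := fun j => eq_zero_of_mass (hx j)
      ((Finset.sum_eq_zero_iff_of_nonneg (fun j _ => mass_nonneg (hx j))).1 hS.symm j
        (Finset.mem_univ j))
    rw [← hS]
    simp [gap, info, this, hF.zero, ent_zero]
  · set S := ∑ j, mass (x j)
    have hi : 0 ≤ S⁻¹ := by positivity
    have := h J (fun j => S⁻¹ • x j) (fun j => smul_nonneg hi (hx j))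
      (by simp only [mass_smul, ← Finset.mul_sum]; exact inv_mul_cancel₀ hS.ne')
    have e1 : gap F (fun j => S⁻¹ • x j) = S⁻¹ * gap F x := by
      unfold gap
      rw [← Finset.smul_sum, hF.hom _ hi _ (sum_nn hx),
        Finset.sum_congr rfl (fun j _ => hF.hom _ hi _ (hx j)), ← Finset.mul_sum]
      ring
    have e2 : info (fun j => S⁻¹ • x j) = S⁻¹ * info x := by
      unfold info
      rw [← Finset.smul_sum, ent_smul _ hi _ (sum_nn hx),
        Finset.sum_congr rfl (fun j _ => ent_smul _ hi _ (hx j)), ← Finset.mul_sum]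
      ring
    rw [e1, e2] at this
    have h2 := mul_le_mul_of_nonneg_left this hS.le
    have e3 : S * (S⁻¹ * gap F x) = gap F x := by field_simp
    have e4 : S * (A * (S⁻¹ * info x) + K) = A * info x + K * S := by field_simp
    linarith

lemma descent {F : (ι → ℝ) → ℝ} {θ M A κ ρ K A1 K1 : ℝ} (hθ : 0 ≤ θ) (hF : QA F θ M)
    (hA : 0 ≤ A) (hκ : 0 < κ) (hAκ : θ / 2 ≤ A * κ) (hA1 : 0 ≤ A1) (hK : 0 ≤ K) (hK1 : 0 ≤ K1)
    (hσ : ∀ (J : Type) [Fintype J] (x : J → ι → ℝ), (∀ j, 0 ≤ x j) → ∑ j, mass (x j) = 1 →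
      dblE x < κ → dblD x ≤ ρ)
    (hz : Bd F A K) (hy : Bd (fun x => - F x) A1 K1) :
    Bd F A (A * (Real.log 2 + 2) + 2 * A1 + 2 * θ + ρ * (K + K1)) := by
  have main : ∀ N : ℕ, ∀ (J : Type) [Fintype J] (x : J → ι → ℝ), (∀ j, 0 ≤ x j) →
      ∑ j, mass (x j) = 1 → info x < N * κ →
      gap F x ≤ A * info x + (A * (Real.log 2 + 2) + 2 * A1 + 2 * θ + ρ * (K + K1)) := by
    intro N
    induction N with
    | zero =>
      intro J _ x hx h1 h
      have := info_nonneg hx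
      simp at h; linarith
    | succ N ih =>
      intro J _ x hx h1 h
      by_cases hE : dblE x < κ
      · have hD := (peel_mass h1).trans (hσ J x hx h1 hE)
        have g := peel_gap hθ hF hx h1
        have iz := peel_info_z hx h1
        have iy := peel_info_y hx h1
        have bz := hz.scale hF (pz x) (pz_nonneg x)
        have b_y := hy.scale hF.neg (py x) (py_nonneg x)
        have hyz : ∑ j, mass (py x j) = ∑ j, mass (pz x j) := by
          rw [← mass_sum, ← mass_sum, sum_py_eq h1]
        rw [← hyz] at bz
        have eg : gap (fun x => - F x) (py x) = - gap F (py x) := by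
          simp only [gap, Finset.sum_neg_distrib]; ring
        rw [eg] at b_y
        have q1 := mul_le_mul_of_nonneg_left hD hK
        have q2 := mul_le_mul_of_nonneg_left hD hK1
        have q3 := mul_le_mul_of_nonneg_left iy hA1
        have q4 := mul_le_mul_of_nonneg_left (iz.trans (add_le_add_right iy _)) hA
        linarith
      · push Not at hE
        have i := info_dbl hx h1
        have g := gap_dbl hF hx h1
        have := ih (J × J) (dbl x) (dbl_nonneg hx) (sum_mass_dbl hx h1)
          (by push_cast at h; linarith)
        have q := mul_le_mul_of_nonneg_left hE hA
        rw [i]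
        linarith
  intro J _ x hx h1
  obtain ⟨N, hN⟩ := exists_nat_gt (info x / κ)
  exact main N J x hx h1 (by rwa [div_lt_iff₀ hκ] at hN)

lemma Bd.mono {F : (ι → ℝ) → ℝ} {A K K' : ℝ} (h : Bd F A K) (hK : K ≤ K') : Bd F A K' :=
  fun J _ x hx h1 => (h J x hx h1).trans (by linarith)

lemma Bd.closed {F : (ι → ℝ) → ℝ} {A K : ℝ} (h : ∀ δ > 0, Bd F A (K + δ)) : Bd F A K :=
  fun J _ x hx h1 => le_of_forall_pos_le_add fun δ hδ => by
    have := h δ hδ J x hx h1; linarith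

lemma Bd.init {F : (ι → ℝ) → ℝ} {θ M A : ℝ} (hF : QA F θ M) (hA : 0 ≤ A) : Bd F A (2 * M) := by
  intro J _ x hx h1
  have a := (abs_le.1 (hF.bdd _ (sum_nn hx))).2
  rw [mass_tot h1] at a
  have b := Finset.sum_le_sum (fun j (_ : j ∈ Finset.univ) => (abs_le.1 (hF.bdd _ (hx j))).1)
  rw [Finset.sum_neg_distrib, ← Finset.mul_sum, h1] at b
  have := mul_nonneg hA (info_nonneg hx)
  unfold gap
  linarith

end

lemma step1 : ∃ A1 K1 : ℝ, 0 ≤ A1 ∧ 0 ≤ K1 ∧ ∀ (ι : Type) [Fintype ι] (F : (ι → ℝ) → ℝ)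
    (θ M : ℝ), 0 ≤ θ → θ ≤ 1 → QA F θ M → Bd F A1 K1 := by
  set κ : ℝ := 1 / 2 * Real.log (15/16) + 1 / 8 * Real.log (5/3) with hκd
  have hκ : 0 < κ := by
    have : κ = 1 / 8 * Real.log ((15/16) ^ 4 * (5/3)) := by
      rw [Real.log_mul (by norm_num) (by norm_num), Real.log_pow]; push_cast; rw [hκd]; ring
    rw [this]
    have := Real.log_pos (x := (15/16) ^ 4 * (5/3)) (by norm_num)
    positivity
  have h53 : 0 < Real.log (5/3) := Real.log_pos (by norm_num)
  have hl2 : 0 < Real.log 2 := Real.log_pos (by norm_num)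
  set A := 1 / (2 * κ) with hAd
  have hA : 0 ≤ A := by positivity
  refine ⟨A, (A * (Real.log 2 + 4) + 2) / (1 - 1/2), hA, by norm_num; positivity, ?_⟩
  intro ι _ F θ M hθ hθ1 hF
  have hAκ : θ / 2 ≤ A * κ := by
    have : A * κ = 1 / 2 := by rw [hAd]; field_simp
    linarith
  have hσ : ∀ (J : Type) [Fintype J] (x : J → ι → ℝ), (∀ j, 0 ≤ x j) → ∑ j, mass (x j) = 1 →
      dblE x < κ → dblD x ≤ 1/4 := by
    intro J _ x hx h1 hE
    have := dblE_ge1 hx h1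
    by_contra hc
    push Not at hc
    nlinarith
  have := contraction (P := fun K => Bd F A K ∧ Bd (fun x => - F x) A K) (K0 := 2 * M)
    (B := A * (Real.log 2 + 4) + 2) (ρ := 1/2) (by norm_num) (by norm_num)
    ⟨Bd.init hF hA, Bd.init hF.neg hA⟩ (fun K K' h hp => ⟨hp.1.mono h, hp.2.mono h⟩)
    (fun K h => ⟨Bd.closed fun δ hδ => (h δ hδ).1, Bd.closed fun δ hδ => (h δ hδ).2⟩)
    (by positivity) ?_
  · exact this.1
  · intro K hK hp
    have hp1' : Bd (fun x => - (fun x => - F x) x) A K := by simpa using hp.1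
    refine ⟨(descent hθ hF hA hκ hAκ hA hK hK hσ hp.1 hp.2).mono ?_,
      (descent hθ hF.neg hA hκ hAκ hA hK hK hσ hp.2 hp1').mono ?_⟩ <;> linarith

lemma step2 (ε : ℝ) (hε : 0 < ε) (hε1 : ε < 1/2) : ∃ C : ℝ, 0 ≤ C ∧
    ∀ (ι : Type) [Fintype ι] (F : (ι → ℝ) → ℝ)
    (M : ℝ), QA F (1 - ε) M → Bd F (1 / (2 * Real.log 2)) C := by
  obtain ⟨A1, K1, hA1, hK1, hstep⟩ := step1
  have hl2 : 0 < Real.log 2 := Real.log_pos (by norm_num)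
  have hl2' : Real.log 2 ≤ 1 := by
    have := Real.log_le_sub_one_of_pos (x := 2) (by norm_num); linarith
  set A := 1 / (2 * Real.log 2) with hAd
  have hA : 0 ≤ A := by positivity
  set τ := ε * Real.log 2 / 2 with hτd
  have hτ : 0 < τ := by positivity
  have hτ1 : τ ≤ 1 := by nlinarith
  have hL : 0 < 1 - Real.log τ := by
    have := Real.log_nonpos hτ.le hτ1; linarith
  set ρ := max 0 (1 - ε * Real.log 2 / (1 - Real.log τ)) with hρd
  have hρ0 : 0 ≤ ρ := le_max_left _ _
  have hρ1 : ρ < 1 := by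
    apply max_lt one_pos
    have : 0 < ε * Real.log 2 / (1 - Real.log τ) := by positivity
    linarith
  set B := A * (Real.log 2 + 2) + 2 * A1 + 2 * (1 - ε) + ρ * K1 with hBd
  have hB : 0 ≤ B := by
    have : 0 ≤ 1 - ε := by linarith
    positivity
  refine ⟨B / (1 - ρ), div_nonneg hB (by linarith), ?_⟩
  intro ι _ F M hF
  have hθ : 0 ≤ 1 - ε := by linarith
  have hAκ : (1 - ε) / 2 ≤ A * ((1 - ε) * Real.log 2) := by
    apply le_of_eq; rw [hAd]; field_simp
  have hσ : ∀ (J : Type) [Fintype J] (x : J → ι → ℝ), (∀ j, 0 ≤ x j) → ∑ j, mass (x j) = 1 →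
      dblE x < (1 - ε) * Real.log 2 → dblD x ≤ ρ := by
    intro J _ x hx h1 hE
    have := dblE_ge2 hx h1 hτ hτ1
    refine le_trans ?_ (le_max_right _ _)
    rw [le_sub_comm, div_le_iff₀ hL]
    rw [hτd] at this
    rw [← hτd] at this
    nlinarith
  have hy := hstep ι (fun x => - F x) (1 - ε) M hθ (by linarith) hF.neg
  refine contraction (P := fun K => Bd F A K) (K0 := 2 * M) hρ0 hρ1 (Bd.init hF hA)
    (fun K K' h hp => hp.mono h) (fun K h => Bd.closed h) hB ?_
  intro K hK hp
  refine (descent hθ hF hA (by nlinarith) hAκ hA1 hK hK1 hσ hp hy).mono ?_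
  rw [hBd]; linarith

section
variable {ι : Type} [Fintype ι]

noncomputable def hh (u : ι → ℝ) : ℝ := ∑ i, u i * Real.logb 2 (u i)

noncomputable def homExt (f : (ι → ℝ) → ℝ) (x : ι → ℝ) : ℝ := mass x * f ((mass x)⁻¹ • x)

lemma normalize_mem {x : ι → ℝ} (hx : 0 ≤ x) (h : 0 < mass x) :
    (mass x)⁻¹ • x ∈ stdSimplex ℝ ι := by
  refine ⟨fun i => ?_, ?_⟩
  · exact mul_nonneg (by positivity) (hx i)
  · change mass _ = 1
    rw [mass_smul]; exact inv_mul_cancel₀ h.ne'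

lemma homExt_QA {f : (ι → ℝ) → ℝ} {θ M : ℝ} (hf : diffBound 2 (stdSimplex ℝ ι) f θ)
    (hM : ∀ u ∈ stdSimplex ℝ ι, |f u| ≤ M) : QA (homExt f) θ M where
  hom a ha x hx := by
    unfold homExt
    rw [mass_smul]
    by_cases h0 : a = 0
    · simp [h0]
    · rw [smul_smul, mul_inv, mul_comm a⁻¹, mul_assoc (mass x)⁻¹, inv_mul_cancel₀ h0, mul_one]
      ring
  mid x y hx hy h := by
    rcases (mass_nonneg hx).eq_or_lt with h0 | h0
    · have h1 := eq_zero_of_mass hx h0.symm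
      have h2 := eq_zero_of_mass hy (h ▸ h0.symm)
      subst h1; subst h2; simp [homExt, mass_zero]
    · have hv := normalize_mem hx h0
      have hw := normalize_mem hy (h ▸ h0)
      unfold homExt
      rw [mass_add, ← h] at *
      set m := mass x
      set v := m⁻¹ • x with hvd
      set w := m⁻¹ • y with hwd
      have e0 : v + ((1:ℕ):ℝ) • ((1/2 : ℝ) • (w - v)) = (1/2 : ℝ) • v + (1/2 : ℝ) • w := by
        funext i; simp; ring
      have e1 : v + ((2:ℕ):ℝ) • ((1/2 : ℝ) • (w - v)) = w := by
        funext i; simp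
      have e2 : (m + m)⁻¹ • (x + y) = (1/2 : ℝ) • v + (1/2 : ℝ) • w := by
        funext i; simp [hvd, hwd]; field_simp; ring
      have := hf v ((1/2 : ℝ) • (w - v)) (by
        intro j hj
        interval_cases j
        · simpa using hv
        · rw [e0]; exact convex_stdSimplex ℝ ι hv hw (by norm_num) (by norm_num) (by norm_num)
        · rw [e1]; exact hw)
      rw [Finset.sum_range_succ, Finset.sum_range_succ, Finset.sum_range_succ, e0, e1] at this
      simp at this
      rw [e2]
      have e3 : (m + m) * f ((1/2 : ℝ) • v + (1/2 : ℝ) • w) - m * f v - m * f w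
        = - m * (f v + -(2 * f ((1/2 : ℝ) • v + (1/2 : ℝ) • w)) + f w) := by ring
      rw [e3, abs_mul, abs_neg, abs_of_pos h0, mul_comm]
      apply mul_le_mul_of_nonneg_right _ h0.le
      simpa using this
  bdd x hx := by
    rcases (mass_nonneg hx).eq_or_lt with h0 | h0
    · simp [homExt, ← h0]
    · unfold homExt
      rw [abs_mul, abs_of_pos h0, mul_comm]
      exact mul_le_mul_of_nonneg_right (hM _ (normalize_mem hx h0)) h0.le

/-- approximate convexity -/
def AC (g : (ι → ℝ) → ℝ) (C : ℝ) : Prop :=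
  ∀ (J : Type) [Fintype J] (w : J → ℝ) (v : J → ι → ℝ), (∀ j, 0 ≤ w j) → ∑ j, w j = 1 →
    (∀ j, v j ∈ stdSimplex ℝ ι) → g (∑ j, w j • v j) ≤ ∑ j, w j * g (v j) + C

lemma ent_simplex {u : ι → ℝ} (hu : u ∈ stdSimplex ℝ ι) : ent u = Real.log 2 * hh u := by
  have hl2 : 0 < Real.log 2 := Real.log_pos (by norm_num)
  have : mass u = 1 := hu.2
  unfold ent hh
  rw [this, Finset.mul_sum]
  simp only [Real.log_one, mul_zero, sub_zero, Real.logb]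
  refine Finset.sum_congr rfl fun i _ => ?_
  field_simp

lemma homExt_simplex {f : (ι → ℝ) → ℝ} {u : ι → ℝ} (hu : u ∈ stdSimplex ℝ ι) :
    homExt f u = f u := by
  have : mass u = 1 := hu.2
  simp [homExt, this]

lemma AC_of_Bd {f : (ι → ℝ) → ℝ} {θ M C : ℝ} (hF : QA (homExt f) θ M)
    (hB : Bd (homExt f) (1 / (2 * Real.log 2)) C) : AC (fun u => f u + hh u / 2) C := by
  intro J _ w v hw h1 hv
  have hl2 : 0 < Real.log 2 := Real.log_pos (by norm_num)
  have hv0 : ∀ j, 0 ≤ v j := fun j i => (hv j).1 i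
  have hm : ∀ j, mass (w j • v j) = w j := fun j => by
    rw [mass_smul, show mass (v j) = 1 from (hv j).2, mul_one]
  have hs : ∑ j, w j • v j ∈ stdSimplex ℝ ι :=
    (convex_stdSimplex ℝ ι).sum_mem (fun j _ => hw j) h1 (fun j _ => hv j)
  have := hB J (fun j => w j • v j) (fun j => smul_nonneg (hw j) (hv0 j)) (by simp only [hm, h1])
  unfold gap info at this
  rw [homExt_simplex hs, ent_simplex hs,
    Finset.sum_congr rfl (fun j _ => (hF.hom _ (hw j) _ (hv0 j)).trans
      (by rw [homExt_simplex (hv j)])),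
    Finset.sum_congr rfl (fun j _ => (ent_smul _ (hw j) _ (hv0 j)).trans
      (by rw [ent_simplex (hv j), mul_left_comm])), ← Finset.mul_sum] at this
  have e : 1 / (2 * Real.log 2) * (Real.log 2 * ∑ j, w j * hh (v j)
      - Real.log 2 * hh (∑ j, w j • v j)) = (∑ j, w j * hh (v j)
      - hh (∑ j, w j • v j)) / 2 := by field_simp
  rw [e] at this
  have e2 : ∑ j, w j * (f (v j) + hh (v j) / 2) = ∑ j, w j * f (v j)
      + (∑ j, w j * hh (v j)) / 2 := by
    rw [Finset.sum_div, ← Finset.sum_add_distrib]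
    exact Finset.sum_congr rfl fun j _ => by ring
  simp only [e2]
  linarith

lemma hh_cont : Continuous (hh : (ι → ℝ) → ℝ) := by
  unfold hh
  refine continuous_finsetSum _ fun i _ => ?_
  have : (fun a : ι → ℝ => a i * Real.logb 2 (a i)) =
      fun a => (a i * Real.log (a i)) / Real.log 2 := by
    funext a; unfold Real.logb; ring
  rw [this]
  exact (Real.continuous_mul_log.comp (continuous_apply i)).div_const _

lemma minorant {g : (ι → ℝ) → ℝ} {C : ℝ} (hC : 0 ≤ C)
    (hg : ContinuousOn g (stdSimplex ℝ ι)) (hAC : AC g C)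
    {u : ι → ℝ} (hu : u ∈ stdSimplex ℝ ι) :
    ∃ a : ι → ℝ, (∀ v ∈ stdSimplex ℝ ι, ∑ i, v i * a i ≤ g v) ∧
      g u - C - 1 ≤ ∑ i, u i * a i := by
  classical
  set S : Set ((ι → ℝ) × ℝ) := (fun v => (v, g v)) '' stdSimplex ℝ ι with hS
  have hE : IsClosed {p : (ι → ℝ) × ℝ | p.1 ∈ stdSimplex ℝ ι ∧ g p.1 - C ≤ p.2} :=
    IsClosed.epigraph (isClosed_stdSimplex ℝ ι) (hg.sub continuousOn_const)
  have hsub : convexHull ℝ S ⊆ {p : (ι → ℝ) × ℝ | p.1 ∈ stdSimplex ℝ ι ∧ g p.1 - C ≤ p.2} := by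
    intro p hmem
    rw [mem_convexHull_iff_exists_fintype] at hmem
    obtain ⟨J, _, w, z, hw, h1, hz, hc⟩ := hmem
    choose v hv hvz using hz
    have := hAC J w v hw h1 hv
    have hc1 : ∑ j, w j • v j = p.1 := by
      have := congrArg Prod.fst hc
      simpa [Prod.fst_sum, ← hvz] using this
    have hc2 : ∑ j, w j * g (v j) = p.2 := by
      have := congrArg Prod.snd hc
      simpa [Prod.snd_sum, ← hvz] using this
    have hm := (convex_stdSimplex ℝ ι).sum_mem (fun j _ => hw j) h1 (fun j _ => hv j)
    rw [hc1] at hm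
    rw [hc1, hc2] at this
    exact ⟨hm, by linarith⟩
  have hnot : (u, g u - C - 1) ∉ closure (convexHull ℝ S) := by
    intro hmem
    have := (closure_minimal hsub hE hmem).2
    simp only at this
    linarith
  obtain ⟨φ, α, h1, h2⟩ := geometric_hahn_banach_closed_point (convex_convexHull ℝ S).closure
    isClosed_closure hnot
  have hφ : ∀ v t, φ (v, t) = ∑ i, v i * φ (Pi.single i 1, 0) + t * φ (0, 1) := by
    intro v t
    have e : (v, t) = ∑ i, v i • ((Pi.single i 1 : ι → ℝ), (0:ℝ)) + t • ((0 : ι → ℝ), (1:ℝ)) := by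
      ext j
      · simp [Prod.fst_sum, Finset.sum_apply, Pi.single_apply]
      · simp [Prod.snd_sum]
    rw [e, map_add, map_sum]
    simp only [map_smul, smul_eq_mul]
  have hb : ∀ v ∈ stdSimplex ℝ ι, φ (v, g v) < φ (u, g u - C - 1) := fun v hv =>
    (h1 _ (subset_closure (subset_convexHull ℝ S ⟨v, hv, rfl⟩))).trans h2
  set s := φ (0, 1)
  set l : ι → ℝ := fun i => φ (Pi.single i 1, 0) with hl
  have hb : ∀ v ∈ stdSimplex ℝ ι,
      ∑ i, v i * l i + g v * s < ∑ i, u i * l i + (g u - C - 1) * s := by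
    intro v hv
    have := hb v hv
    rwa [hφ v, hφ u] at this
  have hs : s < 0 := by
    have := hb u hu
    by_contra hcon
    push Not at hcon
    nlinarith
  have ea : ∀ v ∈ stdSimplex ℝ ι, ∑ i, v i * ((l i - ∑ k, u k * l k) / (-s) + (g u - C - 1))
      = (∑ i, v i * l i - ∑ k, u k * l k) / (-s) + (g u - C - 1) := by
    intro v hv
    have : ∀ i, v i * ((l i - ∑ k, u k * l k) / (-s) + (g u - C - 1))
      = (v i * l i) / (-s) + v i * (- (∑ k, u k * l k) / (-s) + (g u - C - 1)) := by
      intro i; ring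
    simp only [this, Finset.sum_add_distrib, ← Finset.sum_mul, ← Finset.sum_div]
    rw [hv.2]; ring
  refine ⟨fun i => (l i - ∑ k, u k * l k) / (-s) + (g u - C - 1), ?_, ?_⟩
  · intro v hv
    rw [ea v hv]
    have := hb v hv
    rw [← le_sub_iff_add_le, div_le_iff₀ (by linarith)]
    linarith
  · rw [ea u hu]; simp

lemma gibbs2 {u t : ι → ℝ} (hu : u ∈ stdSimplex ℝ ι) (ht : ∀ i, 0 < t i) (h1 : ∑ i, t i ≤ 1) :
    ∑ i, u i * Real.logb 2 (t i) ≤ hh u := by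
  have hl2 : 0 < Real.log 2 := Real.log_pos (by norm_num)
  have h := Finset.sum_le_sum (fun i (_ : i ∈ Finset.univ) =>
    tan_le (hu.1 i) (ht i).le (fun h => absurd h (ht i).ne'))
  simp only [Finset.sum_sub_distrib] at h
  rw [hu.2] at h
  have e : ∀ t : ι → ℝ, ∑ i, u i * Real.logb 2 (t i) = (∑ i, u i * Real.log (t i)) / Real.log 2 := by
    intro t
    rw [Finset.sum_div]
    exact Finset.sum_congr rfl fun i _ => by unfold Real.logb; ring
  unfold hh
  rw [e, e, div_le_div_iff_of_pos_right hl2]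
  linarith

lemma dualsum [Nonempty ι] {g : (ι → ℝ) → ℝ} {a b : ι → ℝ}
    (ha : ∀ v ∈ stdSimplex ℝ ι, ∑ i, v i * a i ≤ g v)
    (hb : ∀ v ∈ stdSimplex ℝ ι, ∑ i, v i * b i ≤ hh v - g v) :
    ∑ i, (2 : ℝ) ^ a i * (2 : ℝ) ^ b i ≤ 1 := by
  set x : ι → ℝ := fun i => (2 : ℝ) ^ a i * (2 : ℝ) ^ b i with hx
  have hx0 : ∀ i, 0 < x i := fun i => by positivity
  have hm : 0 < mass x := Finset.sum_pos (fun i _ => hx0 i) Finset.univ_nonempty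
  have hv := normalize_mem (fun i => (hx0 i).le : 0 ≤ x) hm
  have h1 := ha _ hv
  have h2 := hb _ hv
  set v := (mass x)⁻¹ • x with hvd
  have e : hh v = ∑ i, v i * a i + ∑ i, v i * b i - Real.logb 2 (mass x) := by
    have : ∀ i, Real.logb 2 (v i) = a i + b i - Real.logb 2 (mass x) := by
      intro i
      have : v i = x i / mass x := by simp [hvd]; ring
      rw [this, Real.logb_div (hx0 i).ne' hm.ne', hx]
      simp only
      rw [Real.logb_mul (by positivity) (by positivity), Real.logb_rpow (by norm_num) (by norm_num),
        Real.logb_rpow (by norm_num) (by norm_num)]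
    unfold hh
    simp only [this, mul_sub, mul_add, Finset.sum_sub_distrib, Finset.sum_add_distrib,
      ← Finset.sum_mul]
    rw [hv.2, one_mul]
  have h3 : Real.logb 2 (mass x) ≤ 0 := by linarith
  by_contra hc
  push Not at hc
  have := Real.logb_pos (b := 2) (by norm_num) (show 1 < mass x from hc)
  linarith

/-- the norm generated by a family of positive functionals -/
noncomputable def normY (Y : Set (ι → ℝ)) (x : ι → ℝ) : ℝ :=
  sSup ((fun y => ∑ i, |x i| * y i) '' Y)

structure GoodY (Y : Set (ι → ℝ)) : Prop where
  ne : Y.Nonempty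
  pos : ∀ y ∈ Y, ∀ i, 0 < y i
  bd : ∃ R : ℝ, ∀ y ∈ Y, ∀ i, y i ≤ R

lemma GoodY.le {Y : Set (ι → ℝ)} (hY : GoodY Y) (x : ι → ℝ) {y} (hy : y ∈ Y) :
    ∑ i, |x i| * y i ≤ normY Y x := by
  obtain ⟨R, hR⟩ := hY.bd
  refine le_csSup ⟨∑ i, |x i| * R, ?_⟩ ⟨y, hy, rfl⟩
  rintro _ ⟨z, hz, rfl⟩
  exact Finset.sum_le_sum fun i _ => mul_le_mul_of_nonneg_left (hR z hz i) (abs_nonneg _)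

lemma GoodY.norm_le {Y : Set (ι → ℝ)} (hY : GoodY Y) (x : ι → ℝ) {c : ℝ}
    (h : ∀ y ∈ Y, ∑ i, |x i| * y i ≤ c) : normY Y x ≤ c := by
  refine csSup_le (hY.ne.image _) ?_
  rintro _ ⟨z, hz, rfl⟩
  exact h z hz

lemma GoodY.coord {Y : Set (ι → ℝ)} (hY : GoodY Y) (x : ι → ℝ) {y} (hy : y ∈ Y) (i : ι) :
    |x i| * y i ≤ normY Y x :=
  (Finset.single_le_sum (f := fun i => |x i| * y i)
    (fun k _ => mul_nonneg (abs_nonneg _) (hY.pos y hy k).le) (Finset.mem_univ i)).trans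
    (hY.le x hy)

lemma GoodY.lattice {Y : Set (ι → ℝ)} (hY : GoodY Y) : IsLatticeNorm (normY Y) := by
  obtain ⟨y0, hy0⟩ := hY.ne
  have smul_le : ∀ (a : ℝ) (x), normY Y (a • x) ≤ |a| * normY Y x := by
    intro a x
    refine hY.norm_le _ fun y hy => ?_
    have := mul_le_mul_of_nonneg_left (hY.le x hy) (abs_nonneg a)
    rw [Finset.mul_sum] at this
    refine le_trans (le_of_eq (Finset.sum_congr rfl fun i _ => ?_)) this
    rw [Pi.smul_apply, smul_eq_mul, abs_mul]
    ring
  refine ⟨fun x => ?_, fun x => ⟨fun h => ?_, fun h => ?_⟩, fun a x => ?_, fun x y => ?_,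
    fun x y h => ?_⟩
  · exact (Finset.sum_nonneg fun i _ => mul_nonneg (abs_nonneg _) (hY.pos y0 hy0 i).le).trans
      (hY.le x hy0)
  · funext i
    have h1 := hY.coord x hy0 i
    rw [h] at h1
    have h2 := hY.pos y0 hy0 i
    have : |x i| ≤ 0 := by
      by_contra hc
      push Not at hc
      have := mul_pos hc h2
      linarith
    exact abs_nonpos_iff.1 this
  · subst h
    refine le_antisymm (hY.norm_le _ fun y _ => by simp) ?_
    have := hY.le 0 hy0
    simpa using this
  · refine le_antisymm (smul_le a x) ?_
    by_cases ha : a = 0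
    · subst ha
      have := hY.le ((0:ℝ) • x) hy0
      simpa using this
    · have := smul_le a⁻¹ (a • x)
      rw [smul_smul, inv_mul_cancel₀ ha, one_smul, abs_inv] at this
      have h2 := mul_le_mul_of_nonneg_left this (abs_nonneg a)
      rwa [← mul_assoc, mul_inv_cancel₀ (abs_ne_zero.2 ha), one_mul] at h2
  · refine hY.norm_le _ fun z hz => ?_
    refine le_trans ?_ (add_le_add (hY.le x hz) (hY.le y hz))
    rw [← Finset.sum_add_distrib]
    refine Finset.sum_le_sum fun i _ => ?_
    rw [← add_mul]
    exact mul_le_mul_of_nonneg_right (abs_add_le _ _) (hY.pos z hz i).le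
  · refine hY.norm_le _ fun z hz => ?_
    exact (Finset.sum_le_sum fun i _ => mul_le_mul_of_nonneg_right (h i) (hY.pos z hz i).le).trans
      (hY.le y hz)

lemma GoodY.dual_le {Y : Set (ι → ℝ)} (hY : GoodY Y) {y : ι → ℝ} (hy : y ∈ Y) :
    dualNorm (normY Y) y ≤ 1 := by
  refine csSup_le ⟨0, 0, ?_, by simp⟩ ?_
  · rw [(hY.lattice.2.1 0).2 rfl]; norm_num
  · rintro _ ⟨x, hx, rfl⟩
    refine le_trans (Finset.sum_le_sum fun i _ => ?_) ((hY.le x hy).trans hx)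
    exact mul_le_mul_of_nonneg_right (le_abs_self _) (hY.pos y hy i).le

lemma GoodY.pair {Y : Set (ι → ℝ)} (hY : GoodY Y) {x y : ι → ℝ} (hx : normY Y x ≤ 1)
    (hy : dualNorm (normY Y) y ≤ 1) : ∑ i, |x i| * |y i| ≤ 1 := by
  obtain ⟨y0, hy0⟩ := hY.ne
  refine le_trans ?_ hy
  refine le_csSup ⟨∑ i, |y i| / y0 i, ?_⟩
    ⟨fun i => if 0 ≤ y i then |x i| else - |x i|, ?_, ?_⟩
  · rintro _ ⟨z, hz, rfl⟩
    refine Finset.sum_le_sum fun i _ => ?_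
    have h1 := (hY.coord z hy0 i).trans hz
    have h2 := hY.pos y0 hy0 i
    rw [le_div_iff₀ h2]
    calc z i * y i * y0 i ≤ |z i| * |y i| * y0 i := by
          rw [← abs_mul]; exact mul_le_mul_of_nonneg_right (le_abs_self _) h2.le
      _ = (|z i| * y0 i) * |y i| := by ring
      _ ≤ 1 * |y i| := mul_le_mul_of_nonneg_right h1 (abs_nonneg _)
      _ = |y i| := one_mul _
  · refine le_trans (hY.lattice.2.2.2.2 _ x fun i => ?_) hx
    try simp only
    split_ifs <;> simp
  · refine Finset.sum_congr rfl fun i _ => ?_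
    try simp only
    split_ifs with h
    · rw [abs_of_nonneg h]
    · push Not at h
      rw [abs_of_neg h]; ring

lemma final [Nonempty ι] {f : (ι → ℝ) → ℝ} {C : ℝ} (hC : 0 ≤ C)
    (hf : ContinuousOn f (stdSimplex ℝ ι))
    (h1 : AC (fun u => f u + hh u / 2) C) (h2 : AC (fun u => - f u + hh u / 2) C) :
    ∃ N : (ι → ℝ) → ℝ, IsLatticeNorm N ∧ ∀ u ∈ stdSimplex ℝ ι,
      |f u - (1 / 2) * (latticeIndicator N u - latticeIndicator (dualNorm N) u)| ≤ C + 1 := by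
  classical
  have c1 : ContinuousOn (fun u => f u + hh u / 2) (stdSimplex ℝ ι) :=
    hf.add (hh_cont.continuousOn.div_const _)
  have c2 : ContinuousOn (fun u => - f u + hh u / 2) (stdSimplex ℝ ι) :=
    hf.neg.add (hh_cont.continuousOn.div_const _)
  set Y : Set (ι → ℝ) := {y | ∃ b : ι → ℝ, (∀ v ∈ stdSimplex ℝ ι, ∑ i, v i * b i ≤
    - f v + hh v / 2) ∧ y = fun i => (2 : ℝ) ^ b i} with hYd
  have hY : GoodY Y := by
    refine ⟨?_, ?_, ?_⟩
    · obtain ⟨i⟩ := (inferInstance : Nonempty ι)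
      obtain ⟨b, hb, _⟩ := minorant hC c2 h2 (single_mem_stdSimplex ℝ i)
      exact ⟨_, b, hb, rfl⟩
    · rintro _ ⟨b, hb, rfl⟩ i
      positivity
    · refine ⟨∑ i, (2 : ℝ) ^ (- f (Pi.single i 1) + hh (Pi.single i 1) / 2), ?_⟩
      rintro _ ⟨b, hb, rfl⟩ i
      have := hb _ (single_mem_stdSimplex ℝ i)
      simp only [Pi.single_apply, ite_mul, one_mul, zero_mul, Finset.sum_ite_eq',
        Finset.mem_univ, if_true] at this
      refine le_trans (Real.rpow_le_rpow_of_exponent_le (by norm_num) this) ?_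
      exact Finset.single_le_sum
        (f := fun i => (2 : ℝ) ^ (- f (Pi.single i 1) + hh (Pi.single i 1) / 2))
        (fun k _ => by positivity) (Finset.mem_univ i)
  refine ⟨normY Y, hY.lattice, fun u hu => ?_⟩
  obtain ⟨a, ha, hau⟩ := minorant hC c1 h1 hu
  obtain ⟨b, hb, hbu⟩ := minorant hC c2 h2 hu
  have hpair : ∀ x y : ι → ℝ, normY Y x ≤ 1 → (∀ i, x i ≠ 0) → dualNorm (normY Y) y ≤ 1 →
      (∀ i, y i ≠ 0) →
      ∑ i, u i * Real.logb 2 |x i| + ∑ i, u i * Real.logb 2 |y i| ≤ hh u := by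
    intro x y hx hx0 hy hy0
    have := gibbs2 hu (t := fun i => |x i| * |y i|)
      (fun i => mul_pos (abs_pos.2 (hx0 i)) (abs_pos.2 (hy0 i))) (hY.pair hx hy)
    rw [← Finset.sum_add_distrib]
    refine le_trans (le_of_eq (Finset.sum_congr rfl fun i _ => ?_)) this
    rw [Real.logb_mul (abs_ne_zero.2 (hx0 i)) (abs_ne_zero.2 (hy0 i)), mul_add]
  have hlog : ∀ c : ι → ℝ, ∑ i, u i * Real.logb 2 |(2 : ℝ) ^ c i| = ∑ i, u i * c i := by
    intro c
    refine Finset.sum_congr rfl fun i _ => ?_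
    rw [abs_of_pos (by positivity), Real.logb_rpow (by norm_num) (by norm_num)]
  set x0 : ι → ℝ := fun i => (2 : ℝ) ^ a i with hx0d
  set y0 : ι → ℝ := fun i => (2 : ℝ) ^ b i with hy0d
  have x0n : ∀ i, x0 i ≠ 0 := fun i => by positivity
  have y0n : ∀ i, y0 i ≠ 0 := fun i => by positivity
  have hx0 : normY Y x0 ≤ 1 := by
    refine hY.norm_le _ ?_
    rintro _ ⟨b', hb', rfl⟩
    have := dualsum (g := fun u => f u + hh u / 2) ha (b := b')
      (fun v hv => (hb' v hv).trans (by linarith))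
    refine le_trans (le_of_eq (Finset.sum_congr rfl fun i _ => ?_)) this
    rw [abs_of_pos (by positivity)]
  have hy0 : dualNorm (normY Y) y0 ≤ 1 := hY.dual_le ⟨b, hb, rfl⟩
  have p1 : ∑ i, u i * a i ≤ latticeIndicator (normY Y) u := by
    refine le_csSup ⟨hh u - ∑ i, u i * b i, ?_⟩ ⟨x0, hx0, x0n, (hlog a).symm⟩
    rintro _ ⟨x, hx, hxn, rfl⟩
    have := hpair x y0 hx hxn hy0 y0n
    rw [hlog b] at this
    linarith
  have p2 : latticeIndicator (normY Y) u ≤ hh u - ∑ i, u i * b i := by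
    refine csSup_le ⟨_, x0, hx0, x0n, rfl⟩ ?_
    rintro _ ⟨x, hx, hxn, rfl⟩
    have := hpair x y0 hx hxn hy0 y0n
    rw [hlog b] at this
    linarith
  have p3 : ∑ i, u i * b i ≤ latticeIndicator (dualNorm (normY Y)) u := by
    refine le_csSup ⟨hh u - ∑ i, u i * a i, ?_⟩ ⟨y0, hy0, y0n, (hlog b).symm⟩
    rintro _ ⟨y, hy, hyn, rfl⟩
    have := hpair x0 y hx0 x0n hy hyn
    rw [hlog a] at this
    linarith
  have p4 : latticeIndicator (dualNorm (normY Y)) u ≤ hh u - ∑ i, u i * a i := by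
    refine csSup_le ⟨_, y0, hy0, y0n, rfl⟩ ?_
    rintro _ ⟨y, hy, hyn, rfl⟩
    have := hpair x0 y hx0 x0n hy hyn
    rw [hlog a] at this
    linarith
  rw [abs_le]
  constructor <;> linarith

end

end SimplexRep

/-- Theorem 2.9: every continuous `f` on the simplex with `ω₂(f) ≤ 1 − ε` is uniformly close
to `(1/2)(Φ_X − Φ_{X*})` for some lattice norm. -/
theorem simplex_representation_by_indicators :
    ∀ ε : ℝ, 0 < ε → ε < 1 / 2 → ∃ C : ℝ,
      ∀ (n : ℕ) (f : (Fin (n + 1) → ℝ) → ℝ),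
        ContinuousOn f (stdSimplex ℝ (Fin (n + 1))) →
        diffBound 2 (stdSimplex ℝ (Fin (n + 1))) f (1 - ε) →
        ∃ N : (Fin (n + 1) → ℝ) → ℝ, IsLatticeNorm N ∧
          ∀ u ∈ stdSimplex ℝ (Fin (n + 1)),
            |f u - (1 / 2) * (latticeIndicator N u - latticeIndicator (dualNorm N) u)| ≤ C := by
  intro ε hε hε1
  obtain ⟨C, hC, hB⟩ := SimplexRep.step2 ε hε hε1
  refine ⟨C + 1, fun n f hf hd => ?_⟩
  obtain ⟨M, hM⟩ := (isCompact_stdSimplex ℝ (Fin (n + 1))).exists_bound_of_continuousOn hf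
  have hF := SimplexRep.homExt_QA hd hM
  have hd' : diffBound 2 (stdSimplex ℝ (Fin (n + 1))) (fun u => - f u) (1 - ε) := by
    intro x h hx
    have := hd x h hx
    rw [← abs_neg, ← Finset.sum_neg_distrib]
    simpa only [mul_neg, neg_neg] using this
  have hF' := SimplexRep.homExt_QA (M := M) hd' (fun u hu => by rw [abs_neg]; exact hM u hu)
  exact SimplexRep.final hC hf (SimplexRep.AC_of_Bd hF (hB _ _ M hF))
    (SimplexRep.AC_of_Bd hF' (hB _ _ M hF'))
end

section
/- There exist constants c₁, c₂ > 0 such that for every n ≥ 1: (i) every continuous f : B_{ℓ₁ⁿ} → ℝ with ω₂(f;B_{ℓ₁ⁿ}) ≤ 1 admits an affine function φ with sup_{x∈B_{ℓ₁ⁿ}} |f(x) − φ(x)| ≤ c₂ log₂(n+1); and (ii) there exists a continuous f : B_{ℓ₁ⁿ} → ℝ with ω₂(f;B_{ℓ₁ⁿ}) ≤ 1 such that every affine function φ satisfies sup_{x∈B_{ℓ₁ⁿ}} |f(x) − φ(x)| ≥ c₁ log₂(n+1). (Theorem 3.8(a): c₁ log₂(n+1) ≤ w₂(ℓ₁ⁿ)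 ≤ c₂ log₂(n+1).) -/
open Finset

/-- The closed unit ball of `ℓ₁ⁿ`. -/
def l1Ball (n : ℕ) : Set (Fin n → ℝ) := {x | ∑ i, |x i| ≤ 1}

lemma exists_sub_vec {n : ℕ} (a : Fin n → ℕ) (t : ℕ) (ht : t ≤ ∑ i, a i) :
    ∃ b : Fin n → ℕ, (∀ i, b i ≤ a i) ∧ ∑ i, b i = t := by
  induction t with
  | zero => exact ⟨fun _ => 0, fun i => Nat.zero_le _, by simp⟩
  | succ t ih =>
    obtain ⟨b, hb, hs⟩ := ih (by omega)
    have : ∃ i, b i < a i := by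
      by_contra! h
      have := Finset.sum_le_sum (fun i (_ : i ∈ Finset.univ) => h i)
      omega
    obtain ⟨i, hi⟩ := this
    refine ⟨fun j => b j + (if j = i then 1 else 0), fun j => ?_, ?_⟩
    · by_cases h : j = i
      · subst h; simp; omega
      · simp [h, hb j]
    · simp [Finset.sum_add_distrib, hs]

lemma dyadic_mem {n : ℕ} (s : Fin n → ℝ) (hs : ∀ i, s i = 1 ∨ s i = -1) (j : ℕ)
    (a : Fin n → ℕ) (ha : ∑ i, a i ≤ 2 ^ j) :
    (fun i => s i * (a i / 2 ^ j)) ∈ l1Ball n := by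
  have h1 : ∀ i, |s i * ((a i : ℝ) / 2 ^ j)| = a i / 2 ^ j := by
    intro i
    have : |s i| = 1 := by rcases hs i with h | h <;> simp [h]
    rw [abs_mul, this, one_mul, abs_of_nonneg (by positivity)]
  simp only [l1Ball, Set.mem_setOf_eq, h1]
  rw [← Finset.sum_div, div_le_one (by positivity)]
  exact_mod_cast ha

lemma dyadic_bound {n : ℕ} (g : (Fin n → ℝ) → ℝ)
    (mid : ∀ u ∈ l1Ball n, ∀ v ∈ l1Ball n, g ((1 / 2 : ℝ) • (u + v)) ≤ (g u + g v) / 2 + 1 / 2)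
    (h0 : g 0 ≤ 1 / 2) (h1 : ∀ i, g (Pi.single i 1) ≤ 1 / 2)
    (h2 : ∀ i, g (Pi.single i (-1)) ≤ 1 / 2)
    (s : Fin n → ℝ) (hs : ∀ i, s i = 1 ∨ s i = -1) (j : ℕ) :
    ∀ a : Fin n → ℕ, ∑ i, a i ≤ 2 ^ j →
      g (fun i => s i * (a i / 2 ^ j)) ≤ ((j : ℝ) + 1) / 2 := by
  induction j with
  | zero =>
    intro a ha
    by_cases hz : ∀ i, a i = 0
    · have : (fun i => s i * ((a i : ℝ) / 2 ^ 0)) = 0 := by ext i; simp [hz i]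
      rw [this]; simpa using h0
    · push Not at hz
      obtain ⟨i, hi⟩ := hz
      have hle : a i + ∑ k ∈ Finset.univ.erase i, a k ≤ 1 := by
        rw [Finset.add_sum_erase _ _ (Finset.mem_univ i)]; simpa using ha
      have hi1 : a i = 1 := by omega
      have hr : ∑ k ∈ Finset.univ.erase i, a k = 0 := by omega
      have hk : ∀ k, k ≠ i → a k = 0 := by
        intro k hk
        exact (Finset.sum_eq_zero_iff.mp hr) k (by simp [hk])
      have : (fun k => s k * ((a k : ℝ) / 2 ^ 0)) = Pi.single i (s i) := by
        ext k
        by_cases h : k = i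
        · subst h; simp [hi1]
        · simp [h, hk k h]
      rw [this]
      rcases hs i with h | h
      · rw [h]; simpa using h1 i
      · rw [h]; simpa using h2 i
  | succ j ih =>
    intro a ha
    obtain ⟨b, hb, hsb⟩ := exists_sub_vec a (min (2 ^ j) (∑ i, a i)) (min_le_right _ _)
    have hc : ∑ i, (a i - b i) + ∑ i, b i = ∑ i, a i := by
      rw [← Finset.sum_add_distrib]
      exact Finset.sum_congr rfl fun i _ => Nat.sub_add_cancel (hb i)
    have hb2 : ∑ i, b i ≤ 2 ^ j := by omega
    have hc2 : ∑ i, (a i - b i) ≤ 2 ^ j := by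
      rw [pow_succ] at ha; omega
    have e := mid _ (dyadic_mem s hs j b hb2) _ (dyadic_mem s hs j (fun i => a i - b i) hc2)
    have e1 := ih b hb2
    have e2 := ih (fun i => a i - b i) hc2
    have : (fun i => s i * ((a i : ℝ) / 2 ^ (j + 1))) = (1 / 2 : ℝ) •
        ((fun i => s i * ((b i : ℝ) / 2 ^ j)) + (fun i => s i * (((a i - b i : ℕ) : ℝ) / 2 ^ j))) := by
      ext i
      simp only [Pi.smul_apply, Pi.add_apply, smul_eq_mul]
      rw [Nat.cast_sub (hb i), pow_succ]
      field_simp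
      ring
    rw [this]
    push_cast
    linarith

lemma l1Ball_compact (n : ℕ) : IsCompact (l1Ball n) := by
  apply Metric.isCompact_of_isClosed_isBounded
  · exact isClosed_le (by fun_prop) continuous_const
  · refine (Metric.isBounded_closedBall (x := (0 : Fin n → ℝ)) (r := 1)).subset ?_
    intro x hx
    rw [mem_closedBall_zero_iff, pi_norm_le_iff_of_nonneg zero_le_one]
    intro i
    exact (Finset.single_le_sum (f := fun i => |x i|) (fun i _ => abs_nonneg _)
      (Finset.mem_univ i)).trans hx

lemma zero_mem_l1Ball (n : ℕ) : (0 : Fin n → ℝ) ∈ l1Ball n := by simp [l1Ball]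

lemma upper_bound {n : ℕ} (g : (Fin n → ℝ) → ℝ) (hg : ContinuousOn g (l1Ball n))
    (mid : ∀ u ∈ l1Ball n, ∀ v ∈ l1Ball n, g ((1 / 2 : ℝ) • (u + v)) ≤ (g u + g v) / 2 + 1 / 2)
    (h0 : g 0 ≤ 1 / 2) (h1 : ∀ i, g (Pi.single i 1) ≤ 1 / 2)
    (h2 : ∀ i, g (Pi.single i (-1)) ≤ 1 / 2) :
    ∀ x ∈ l1Ball n, g x ≤ (Nat.log 2 n : ℝ) / 2 + 2 := by
  obtain ⟨x, hx, hmax⟩ := (l1Ball_compact n).exists_isMaxOn ⟨0, zero_mem_l1Ball n⟩ hg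
  intro w hw
  refine (hmax hw).trans ?_
  set j := Nat.log 2 n + 1 with hj
  have hn : n ≤ 2 ^ j := (Nat.lt_pow_succ_log_self (by norm_num) n).le
  have hn' : (n : ℝ) ≤ 2 ^ j := by exact_mod_cast hn
  have hp : (0 : ℝ) < 2 ^ j := by positivity
  obtain ⟨s, hs, hxs⟩ : ∃ s : Fin n → ℝ, (∀ i, s i = 1 ∨ s i = -1) ∧ ∀ i, x i = s i * |x i| := by
    refine ⟨fun i => if 0 ≤ x i then 1 else -1, fun i => ?_, fun i => ?_⟩
    · by_cases h : 0 ≤ x i <;> simp [h]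
    · by_cases h : 0 ≤ x i
      · simp [h, abs_of_nonneg h]
      · simp [h, abs_of_neg (not_le.mp h)]
  have hsa : ∀ i, |s i| = 1 := fun i => by rcases hs i with h | h <;> simp [h]
  set N : Fin n → ℕ := fun i => ⌊(2 * 2 ^ j * |x i| : ℝ)⌋₊ with hN
  obtain ⟨b, hb, hsb⟩ := exists_sub_vec N (min (2 ^ j) (∑ i, N i)) (min_le_right _ _)
  have hb2 : ∑ i, b i ≤ 2 ^ j := by omega
  have hbx : ∀ i, (b i : ℝ) / 2 ^ j ≤ 2 * |x i| := by
    intro i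
    rw [div_le_iff₀ hp]
    have h1 : (b i : ℝ) ≤ N i := by exact_mod_cast hb i
    have h2 : (N i : ℝ) ≤ 2 * 2 ^ j * |x i| := Nat.floor_le (by positivity)
    linarith
  have hx1 : ∑ i, |x i| ≤ 1 := hx
  have hz : (fun i => s i * (2 * |x i| - b i / 2 ^ j)) ∈ l1Ball n := by
    have e : ∀ i, |s i * (2 * |x i| - (b i : ℝ) / 2 ^ j)| = 2 * |x i| - b i / 2 ^ j := by
      intro i
      rw [abs_mul, hsa, one_mul, abs_of_nonneg (by linarith [hbx i])]
    simp only [l1Ball, Set.mem_setOf_eq, e]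
    rcases le_total (2 ^ j) (∑ i, N i) with h | h
    · rw [min_eq_left h] at hsb
      have hsb' : ∑ i, (b i : ℝ) = 2 ^ j := by exact_mod_cast hsb
      rw [Finset.sum_sub_distrib, ← Finset.mul_sum, ← Finset.sum_div, hsb', div_self hp.ne']
      linarith
    · rw [min_eq_right h] at hsb
      have hbN : ∀ i, b i = N i := by
        intro i
        exact (Finset.sum_eq_sum_iff_of_le (fun i _ => hb i)).mp hsb i (Finset.mem_univ i)
      calc ∑ i, (2 * |x i| - (b i : ℝ) / 2 ^ j) ≤ ∑ i : Fin n, (1 / 2 ^ j : ℝ) := by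
            refine Finset.sum_le_sum fun i _ => ?_
            have h3 : (2 * 2 ^ j * |x i| : ℝ) < N i + 1 := Nat.lt_floor_add_one _
            rw [hbN i, sub_le_iff_le_add, ← add_div, le_div_iff₀ hp]
            linarith
        _ ≤ 1 := by
            simp only [Finset.sum_const, Finset.card_univ, Fintype.card_fin, nsmul_eq_mul]
            rw [mul_one_div, div_le_one hp]; exact hn'
  have e := mid _ (dyadic_mem s hs j b hb2) _ hz
  have e1 := dyadic_bound g mid h0 h1 h2 s hs j b hb2
  have e2 := hmax hz
  have hxe : (1 / 2 : ℝ) • ((fun i => s i * ((b i : ℝ) / 2 ^ j)) +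
      (fun i => s i * (2 * |x i| - (b i : ℝ) / 2 ^ j))) = x := by
    ext i
    simp only [Pi.smul_apply, Pi.add_apply, smul_eq_mul]
    rw [← mul_add]
    conv_rhs => rw [hxs i]
    ring
  rw [hxe] at e
  simp only [Set.mem_setOf_eq] at e2
  have hjc : (j : ℝ) = Nat.log 2 n + 1 := by rw [hj]; push_cast; ring
  rw [hjc] at e1
  linarith

lemma mid_of_diffBound {n : ℕ} (f : (Fin n → ℝ) → ℝ) (hf : diffBound 2 (l1Ball n) f 1)
    (u : Fin n → ℝ) (hu : u ∈ l1Ball n) (v : Fin n → ℝ) (hv : v ∈ l1Ball n) :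
    |f u + f v - 2 * f ((1 / 2 : ℝ) • (u + v))| ≤ 1 := by
  have hm : (1 / 2 : ℝ) • (u + v) ∈ l1Ball n := by
    simp only [l1Ball, Set.mem_setOf_eq, Pi.smul_apply, Pi.add_apply, smul_eq_mul] at *
    calc ∑ i, |1 / 2 * (u i + v i)| ≤ ∑ i, (1 / 2 * |u i| + 1 / 2 * |v i|) := by
          refine Finset.sum_le_sum fun i _ => ?_
          rw [abs_mul, abs_of_pos (by norm_num : (0 : ℝ) < 1 / 2)]
          linarith [abs_add_le (u i) (v i)]
      _ ≤ 1 := by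
          rw [Finset.sum_add_distrib, ← Finset.mul_sum, ← Finset.mul_sum]; linarith
  have e0 : u + ((0 : ℕ) : ℝ) • ((1 / 2 : ℝ) • (v - u)) = u := by simp
  have e1 : u + ((1 : ℕ) : ℝ) • ((1 / 2 : ℝ) • (v - u)) = (1 / 2 : ℝ) • (u + v) := by
    ext i; simp; ring
  have e2 : u + ((2 : ℕ) : ℝ) • ((1 / 2 : ℝ) • (v - u)) = v := by
    ext i; simp
  have := hf u ((1 / 2 : ℝ) • (v - u)) (by
    intro j hj
    interval_cases j
    · rw [e0]; exact hu
    · rw [e1]; exact hm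
    · rw [e2]; exact hv)
  rw [Finset.sum_range_succ, Finset.sum_range_succ, Finset.sum_range_one, e0, e1, e2] at this
  norm_num at this
  have h : f u + f v - 2 * f ((1 / 2 : ℝ) • (u + v)) =
    f u + -(2 * f ((1 / 2 : ℝ) • (u + v))) + f v := by ring
  norm_num at h ⊢
  rw [h]; exact this

lemma log_bounds (n : ℕ) (hn : 1 ≤ n) :
    (Nat.log 2 n : ℝ) / 2 + 2 ≤ 3 * Real.logb 2 (n + 1) := by
  have hn' : (1 : ℝ) ≤ n := by exact_mod_cast hn
  have h1 : (1 : ℝ) ≤ Real.logb 2 (n + 1) := by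
    rw [Real.le_logb_iff_rpow_le (by norm_num) (by positivity)]; norm_num; linarith
  have h2 : (Nat.log 2 n : ℝ) ≤ Real.logb 2 (n + 1) := by
    rw [Real.le_logb_iff_rpow_le (by norm_num) (by positivity), Real.rpow_natCast]
    have : 2 ^ Nat.log 2 n ≤ n := Nat.pow_log_le_self 2 (by omega)
    have : (2 : ℝ) ^ Nat.log 2 n ≤ n := by exact_mod_cast this
    linarith
  linarith

lemma upper_part (n : ℕ) (hn : 1 ≤ n) (f : (Fin n → ℝ) → ℝ) (hc : ContinuousOn f (l1Ball n))
    (hf : diffBound 2 (l1Ball n) f 1) :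
    ∃ (c : ℝ) (a : Fin n → ℝ), ∀ x ∈ l1Ball n,
            |f x - (c + ∑ i, a i * x i)| ≤ 3 * Real.logb 2 (n + 1) := by
  set a : Fin n → ℝ := fun i => (f (Pi.single i 1) - f (Pi.single i (-1))) / 2 with ha
  refine ⟨f 0, a, ?_⟩
  set g : (Fin n → ℝ) → ℝ := fun x => f x - (f 0 + ∑ i, a i * x i) with hg
  have hgc : ContinuousOn g (l1Ball n) := hc.sub (by fun_prop)
  have mid : ∀ u ∈ l1Ball n, ∀ v ∈ l1Ball n,
      |g u + g v - 2 * g ((1 / 2 : ℝ) • (u + v))| ≤ 1 := by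
    intro u hu v hv
    have h := mid_of_diffBound f hf u hu v hv
    have e : ∑ i, a i * ((1 / 2 : ℝ) • (u + v)) i
        = 1 / 2 * (∑ i, a i * u i + ∑ i, a i * v i) := by
      rw [← Finset.sum_add_distrib, Finset.mul_sum]
      refine Finset.sum_congr rfl fun i _ => ?_
      simp only [Pi.smul_apply, Pi.add_apply, smul_eq_mul]; ring
    have : g u + g v - 2 * g ((1 / 2 : ℝ) • (u + v)) =
        f u + f v - 2 * f ((1 / 2 : ℝ) • (u + v)) := by
      simp only [hg]; rw [e]; ring
    rw [this]; exact h
  have hs : ∀ i t, g (Pi.single i t) = f (Pi.single i t) - (f 0 + a i * t) := by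
    intro i t
    simp [hg, Pi.single_apply]
  have hm : ∀ (i : Fin n) (t : ℝ), |t| ≤ 1 → Pi.single i t ∈ l1Ball n := by
    intro i t ht
    simp only [l1Ball, Set.mem_setOf_eq]
    rw [Finset.sum_eq_single i]
    · simpa using ht
    · intro k _ hk; simp [hk]
    · simp
  have g0 : g 0 = 0 := by simp [hg]
  have hpm : ∀ i, |f (Pi.single i 1) + f (Pi.single i (-1)) - 2 * f 0| ≤ 1 := by
    intro i
    have h := mid_of_diffBound f hf _ (hm i 1 (by simp)) _ (hm i (-1) (by simp))
    have e : (1 / 2 : ℝ) • ((Pi.single i 1 : Fin n → ℝ) + Pi.single i (-1)) = 0 := by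
      rw [← Pi.single_add]; simp
    rwa [e] at h
  have g1 : ∀ i, |g (Pi.single i 1)| ≤ 1 / 2 := by
    intro i
    have := abs_le.mp (hpm i)
    rw [hs, abs_le]; simp only [ha]
    constructor <;> linarith [this.1, this.2]
  have g2 : ∀ i, |g (Pi.single i (-1))| ≤ 1 / 2 := by
    intro i
    have := abs_le.mp (hpm i)
    rw [hs, abs_le]; simp only [ha]
    constructor <;> linarith [this.1, this.2]
  intro x hx
  have hL := log_bounds n hn
  have u1 := upper_bound g hgc (fun u hu v hv => by
    have := abs_le.mp (mid u hu v hv); linarith [this.1]) (by rw [g0]; norm_num)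
    (fun i => (abs_le.mp (g1 i)).2) (fun i => (abs_le.mp (g2 i)).2) x hx
  have u2 := upper_bound (fun x => - g x) hgc.neg (fun u hu v hv => by
    have := abs_le.mp (mid u hu v hv); linarith [this.2]) (by rw [g0]; norm_num)
    (fun i => by linarith [(abs_le.mp (g1 i)).1]) (fun i => by linarith [(abs_le.mp (g2 i)).1]) x hx
  change |g x| ≤ _
  rw [abs_le]
  constructor <;> linarith

lemma xlog_scale (t S : ℝ) (hS : 0 < S) (ht : |t| ≤ S) :
    |t * Real.log t - t * Real.log S| ≤ S := by
  by_cases h0 : t = 0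
  · simp [h0, hS.le]
  have hp : 0 < |t| / S := div_pos (abs_pos.mpr h0) hS
  have h := (Real.abs_log_mul_self_lt (|t| / S) hp ((div_le_one hS).mpr ht)).le
  rw [abs_mul, Real.log_div (abs_pos.mpr h0).ne' hS.ne', Real.log_abs, abs_of_pos hp] at h
  rw [← mul_sub, abs_mul]
  rw [mul_div_assoc', div_le_one hS] at h
  linarith

lemma xlog_second (a b : ℝ) :
    |a * Real.log a - 2 * ((a + b) / 2 * Real.log ((a + b) / 2)) + b * Real.log b|
      ≤ 4 * (|a| + |b|) := by
  by_cases h : |a| + |b| = 0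
  · have h1 : a = 0 := abs_eq_zero.mp (by linarith [abs_nonneg a, abs_nonneg b])
    have h2 : b = 0 := abs_eq_zero.mp (by linarith [abs_nonneg a, abs_nonneg b])
    simp [h1, h2]
  have hS : 0 < |a| + |b| := lt_of_le_of_ne (by positivity) (Ne.symm h)
  have e1 := abs_le.mp (xlog_scale a _ hS (by linarith [abs_nonneg b]))
  have e2 := abs_le.mp (xlog_scale b _ hS (by linarith [abs_nonneg a]))
  have e3 := abs_le.mp (xlog_scale ((a + b) / 2) _ hS (by
    rw [abs_div, abs_two]; linarith [abs_add_le a b, abs_nonneg a, abs_nonneg b]))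
  rw [abs_le]
  constructor <;> linarith [e1.1, e1.2, e2.1, e2.2, e3.1, e3.2]

lemma lower_part (n : ℕ) (hn : 1 ≤ n) :
    ∃ f : (Fin n → ℝ) → ℝ, ContinuousOn f (l1Ball n) ∧ diffBound 2 (l1Ball n) f 1 ∧
          ∀ (c : ℝ) (a : Fin n → ℝ), ∃ x ∈ l1Ball n,
            (Real.log 2 / 32) * Real.logb 2 (n + 1) ≤ |f x - (c + ∑ i, a i * x i)| := by
  have hn' : (1 : ℝ) ≤ n := by exact_mod_cast hn
  have hn0 : (n : ℝ) ≠ 0 := by positivity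
  refine ⟨fun x => 1 / 8 * ∑ i, x i * Real.log (x i), ?_, ?_, ?_⟩
  · refine Continuous.continuousOn ?_
    refine continuous_const.mul (continuous_finsetSum _ fun i _ => ?_)
    exact Real.continuous_mul_log.comp (continuous_apply i)
  · intro x h hx
    have h0 := hx 0 (by norm_num)
    have h2 := hx 2 (by norm_num)
    simp only [l1Ball, Set.mem_setOf_eq, Nat.cast_zero, zero_smul, add_zero, Nat.cast_ofNat,
      Pi.add_apply, Pi.smul_apply, smul_eq_mul] at h0 h2
    rw [Finset.sum_range_succ, Finset.sum_range_succ, Finset.sum_range_one]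
    simp only [Nat.cast_zero, zero_smul, add_zero, Nat.cast_one, one_smul, Nat.cast_ofNat,
      Pi.add_apply, Pi.smul_apply, smul_eq_mul, Nat.choose_zero_right, Nat.choose_one_right,
      Nat.choose_self]
    have key : ∀ i, |x i * Real.log (x i) - 2 * ((x i + h i) * Real.log (x i + h i))
        + (x i + 2 * h i) * Real.log (x i + 2 * h i)| ≤ 4 * (|x i| + |x i + 2 * h i|) := by
      intro i
      have := xlog_second (x i) (x i + 2 * h i)
      rwa [show (x i + (x i + 2 * h i)) / 2 = x i + h i by ring] at this
    have hsum := (Finset.abs_sum_le_sum_abs _ _).trans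
      (Finset.sum_le_sum fun i (_ : i ∈ Finset.univ) => key i)
    rw [← Finset.mul_sum, Finset.sum_add_distrib, Finset.sum_add_distrib,
      Finset.sum_sub_distrib, ← Finset.mul_sum] at hsum
    have hsum' := abs_le.mp hsum
    rw [abs_le]
    norm_num
    constructor <;> linarith [hsum'.1, hsum'.2]
  · intro c a
    by_contra! hE
    have hlog : Real.log 2 / 32 * Real.logb 2 (n + 1) = Real.log (n + 1) / 32 := by
      rw [Real.logb]; field_simp
    rw [hlog] at hE
    set E := Real.log (n + 1) / 32 with hEd
    have k0 := abs_lt.mp (hE 0 (zero_mem_l1Ball n))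
    have k1 : ∀ i, |c + a i| ≤ E := by
      intro i
      have := hE (Pi.single i 1) (by
        simp only [l1Ball, Set.mem_setOf_eq]
        rw [Finset.sum_eq_single i]
        · simp
        · intro k _ hk; simp [hk]
        · simp)
      have z : ∑ k, (Pi.single i 1 : Fin n → ℝ) k * Real.log ((Pi.single i 1 : Fin n → ℝ) k) = 0 := by
        refine Finset.sum_eq_zero fun k _ => ?_
        by_cases h : k = i
        · subst h; simp
        · simp [h]
      rw [z] at this
      simp [Pi.single_apply] at this
      rw [abs_le]; rw [abs_lt] at this
      constructor <;> linarith [this.1, this.2]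
    have k2 : |n * c + ∑ i, a i| ≤ n * E := by
      have := (Finset.abs_sum_le_sum_abs (fun i => c + a i) Finset.univ).trans
        (Finset.sum_le_sum fun i _ => k1 i)
      simpa [Finset.sum_add_distrib] using this
    have k3 := abs_lt.mp (hE (fun _ => 1 / (2 * n)) (by
      simp only [l1Ball, Set.mem_setOf_eq, Finset.sum_const, Finset.card_univ, Fintype.card_fin,
        nsmul_eq_mul]
      rw [abs_of_nonneg (by positivity)]
      field_simp
      norm_num))
    simp only [Finset.sum_const, Finset.card_univ, Fintype.card_fin, nsmul_eq_mul,
      ← Finset.sum_mul] at k3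
    rw [one_div (2 * (n : ℝ)), Real.log_inv] at k3
    simp at k0
    have hl : Real.log (n + 1) ≤ Real.log (2 * n) :=
      Real.log_le_log (by positivity) (by linarith)
    set A := ∑ i, a i with hA
    have k2' := abs_le.mp k2
    have q1 : (n : ℝ) * ((2 * n : ℝ)⁻¹ * -Real.log (2 * n)) = - Real.log (2 * n) / 2 := by
      field_simp
    have q2 : A * (2 * n : ℝ)⁻¹ = (A / n) / 2 := by field_simp
    have q3 : -E ≤ c + A / n := by
      have : c + A / n = (n * c + A) / n := by field_simp
      rw [this, le_div_iff₀ (by positivity)]; linarith [k2'.1]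
    rw [q1, q2] at k3
    linarith [k3.1, k3.2, k0.1, k0.2]

/-- Theorem 3.8(a): `c₁ log₂(n+1) ≤ w₂(ℓ₁ⁿ) ≤ c₂ log₂(n+1)`. -/
theorem whitney_l1_two_sided :
    ∃ c₁ c₂ : ℝ, 0 < c₁ ∧ 0 < c₂ ∧ ∀ n : ℕ, 1 ≤ n →
      ((∀ f : (Fin n → ℝ) → ℝ, ContinuousOn f (l1Ball n) → diffBound 2 (l1Ball n) f 1 →
          ∃ (c : ℝ) (a : Fin n → ℝ), ∀ x ∈ l1Ball n,
            |f x - (c + ∑ i, a i * x i)| ≤ c₂ * Real.logb 2 (n + 1)) ∧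
       (∃ f : (Fin n → ℝ) → ℝ, ContinuousOn f (l1Ball n) ∧ diffBound 2 (l1Ball n) f 1 ∧
          ∀ (c : ℝ) (a : Fin n → ℝ), ∃ x ∈ l1Ball n,
            c₁ * Real.logb 2 (n + 1) ≤ |f x - (c + ∑ i, a i * x i)|)) := by
  refine ⟨Real.log 2 / 32, 3, by have := Real.log_pos (x := 2) (by norm_num); positivity,
    by norm_num, fun n hn => ⟨fun f hc hf => upper_part n hn f hc hf, lower_part n hn⟩⟩
end
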